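/- arXiv:1402.0401 — 3 statements merged into one kernel-verified Lean document; each statement's English description precedes it below -/
import Mathlib

section
/- Let G be a group having a free subgroup F of finite index m. Let n_1, n_2 ≥ 1 and let H_1, H_2 be subgroups of G generated by at most n_1 and n_2 elements respectively. Then H_1 ∩ H_2 is generated by at most m²(n_1 − 1)(n_2 − 1) + m elements. In particular, every virtually free group is strongly Howson. -/
/-!
A free group is left-orderable and acts freely on a tree, so the edges of the tree carry an
invariant linear order. Let `H` be a nontrivial subgroup, and add the edges of an `H`-invariant,
cofinite subtree in increasing order. When an edge merges two components of which at least one is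
finite, the later of the least vertices of the finite ones dies. Every vertex dies exactly once, so
the remaining edges, those that join two infinite components, fall into `|E/H| - |V/H|` orbits: one
less than the rank of `H`.

An edge of the intersection of two subtrees that joins infinite components there does so in both
subtrees, and `H ∩ K`-orbits of such edges embed into pairs of an `H`-orbit and a `K`-orbit. This
gives the Hanna Neumann bound `(n₁ - 1) (n₂ - 1) + 1` for free groups. In a virtually free group
the Schreier formula bounds the ranks of `H₁ ∩ F` and `H₂ ∩ F`, and the cosets of `F` add at most
`m - 1` generators to those of `H₁ ∩ H₂ ∩ F`.
-/

/-- `H` is generated by at most `n` elements. -/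
def Subgroup.GenLE {G : Type*} [Group G] (H : Subgroup G) (n : ℕ) : Prop :=
  ∃ S : Finset G, Subgroup.closure (S : Set G) = H ∧ S.card ≤ n

namespace HannaNeumann

open MulAction SimpleGraph

section Orbits

variable {G α β : Type*} [Group G] [MulAction G α] [MulAction G β]

variable (G) in
/-- The set of `G`-orbits that meet `s`. Cardinalities modulo `G` are stated for this set. -/
def orbits (s : Set α) : Set (orbitRel.Quotient G α) :=
  Quotient.mk _ '' s

theorem mk_mem_orbits {s : Set α} {a : α} (ha : a ∈ s) :
    (Quotient.mk _ a : orbitRel.Quotient G α) ∈ orbits G s :=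
  Set.mem_image_of_mem _ ha

theorem mk_eq_mk_iff {a b : α} :
    (Quotient.mk _ a : orbitRel.Quotient G α) = Quotient.mk _ b ↔ ∃ g : G, g • b = a :=
  Quotient.eq.trans orbitRel_apply

theorem exists_smul_out_eq (a : α) :
    ∃ g : G, g • (Quotient.mk _ a : orbitRel.Quotient G α).out = a :=
  mk_eq_mk_iff.1 (Quotient.out_eq (Quotient.mk (orbitRel G α) a)).symm

theorem out_mem_of_mem_orbits {s : Set α} (hs : ∀ (g : G), ∀ a ∈ s, g • a ∈ s)
    {q : orbitRel.Quotient G α} (hq : q ∈ orbits G s) : q.out ∈ s := by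
  obtain ⟨a, ha, rfl⟩ := hq
  obtain ⟨g, hg⟩ := mk_eq_mk_iff.1 (Quotient.out_eq (Quotient.mk (orbitRel G α) a))
  exact hg ▸ hs g a ha

theorem encard_orbits_le_of_rel {s : Set α} {t : Set β} (R : α → β → Prop)
    (smul : ∀ (g : G) {a b}, R a b → R (g • a) (g • b))
    (total : ∀ a ∈ s, ∃ b ∈ t, R a b)
    (left_unique : ∀ {a a' b}, R a b → R a' b → a = a') :
    (orbits G s).encard ≤ (orbits G t).encard := by
  choose f hft hRf using total
  choose r hrs hr using fun q : orbits G s => q.2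
  refine ENat.card_le_card_of_injective
    (f := fun q => (⟨_, mk_mem_orbits (hft (r q) (hrs q))⟩ : orbits G t)) fun q q' h => ?_
  obtain ⟨g, hg⟩ := mk_eq_mk_iff.1 (congrArg Subtype.val h)
  refine Subtype.ext ((hr q).symm.trans (.trans ?_ (hr q')))
  exact mk_eq_mk_iff.2
    ⟨g, left_unique (hg ▸ smul g (hRf _ (hrs q'))) (hRf _ (hrs q))⟩

theorem encard_orbits_inf_le [IsCancelSMul G α] (H K : Subgroup G) (s t : Set α) :
    (orbits ↥(H ⊓ K) (s ∩ t)).encard ≤ (orbits H s).encard * (orbits K t).encard := by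
  rw [← Set.encard_prod]
  choose r hr_mem hr using fun q : orbits ↥(H ⊓ K) (s ∩ t) => q.2
  refine ENat.card_le_card_of_injective (f := fun q =>
    (⟨(Quotient.mk _ (r q), Quotient.mk _ (r q)),
      mk_mem_orbits (hr_mem q).1, mk_mem_orbits (hr_mem q).2⟩ :
        ↥(orbits H s ×ˢ orbits K t))) fun q q' h => ?_
  have hpair := congrArg Subtype.val h
  obtain ⟨⟨x, hx⟩, hxr : x • r q' = r q⟩ := mk_eq_mk_iff.1 (congrArg Prod.fst hpair)
  obtain ⟨⟨y, hy⟩, hyr : y • r q' = r q⟩ := mk_eq_mk_iff.1 (congrArg Prod.snd hpair)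
  obtain rfl : x = y := IsCancelSMul.right_cancel _ _ _ (hxr.trans hyr.symm)
  refine Subtype.ext ((hr q).symm.trans (.trans ?_ (hr q')))
  exact mk_eq_mk_iff.2 ⟨⟨x, hx, hy⟩, hxr⟩

end Orbits

section EdgeAction

variable {G X : Type*} [Group G] [MulAction G X]

/-- The diagonal action on unordered pairs, used on the edges of a graph. -/
instance : MulAction G (Sym2 X) where
  smul g := Sym2.map (g • ·)
  one_smul e := by
    change Sym2.map _ e = e
    simp only [one_smul, Sym2.map_id', id_eq]
  mul_smul g h e := by
    change Sym2.map _ e = Sym2.map _ (Sym2.map _ e)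
    simp only [Sym2.map_map, Function.comp_def, mul_smul]

theorem smul_sym2_mk (g : G) (a b : X) : g • s(a, b) = s(g • a, g • b) :=
  rfl

end EdgeAction

section EdgeOrder

variable {G X : Type*} [LinearOrder X]

/-- The position of a pair of vertices in the lexicographic order by smaller, then larger
vertex. It is a map rather than an order instance because `Sym2 X` is already ordered by
inclusion. -/
def edgeKey (e : Sym2 X) : X ×ₗ X :=
  toLex (e.inf, e.sup)

theorem edgeKey_injective : Function.Injective (edgeKey : Sym2 X → X ×ₗ X) := fun d e h => by
  have hpair : (d.inf, d.sup) = (e.inf, e.sup) := toLex.injective h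
  exact Sym2.inf_eq_inf_and_sup_eq_sup.1 (Prod.mk.inj hpair)

variable [Group G] [MulAction G X] [CovariantClass G X (· • ·) (· ≤ ·)]

theorem smul_le_smul_iff {g : G} {a b : X} : g • a ≤ g • b ↔ a ≤ b :=
  ⟨fun h => by simpa only [inv_smul_smul] using smul_mono_right g⁻¹ h, fun h => smul_mono_right g h⟩

theorem smul_lt_smul_iff {g : G} {a b : X} : g • a < g • b ↔ a < b :=
  lt_iff_lt_of_le_iff_le smul_le_smul_iff

theorem inf_smul (g : G) (e : Sym2 X) : (g • e).inf = g • e.inf := by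
  induction e with
  | _ a b => exact ((smul_mono_right g).map_inf a b).symm

theorem sup_smul (g : G) (e : Sym2 X) : (g • e).sup = g • e.sup := by
  induction e with
  | _ a b => exact ((smul_mono_right g).map_sup a b).symm

theorem edgeKey_smul_le_iff {g : G} {d e : Sym2 X} :
    edgeKey (g • d) ≤ edgeKey (g • e) ↔ edgeKey d ≤ edgeKey e := by
  simp only [edgeKey, Prod.Lex.toLex_le_toLex, inf_smul, sup_smul, smul_lt_smul_iff,
    smul_le_smul_iff, smul_left_cancel_iff]

theorem edgeKey_smul_lt_iff {g : G} {d e : Sym2 X} :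
    edgeKey (g • d) < edgeKey (g • e) ↔ edgeKey d < edgeKey e :=
  lt_iff_lt_of_le_iff_le edgeKey_smul_le_iff

instance [IsCancelSMul G X] : IsCancelSMul G (Sym2 X) where
  right_cancel' g h e heq := by
    have hinf := congrArg Sym2.inf heq
    rw [inf_smul, inf_smul] at hinf
    exact IsCancelSMul.right_cancel g h _ hinf

end EdgeOrder

section Components

variable {X : Type*} {Γ Γ' : SimpleGraph X} {a b v w : X}

theorem mem_of_reachable_of_closed {s : Set X} (hs : ∀ x y, Γ.Adj x y → x ∈ s → y ∈ s)
    (h : Γ.Reachable v w) (hv : v ∈ s) : w ∈ s := by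
  rw [reachable_iff_reflTransGen] at h
  induction h with
  | refl => exact hv
  | tail _ hadj ih => exact hs _ _ hadj ih

/-- The vertices in the connected component of `v`. -/
def component (Γ : SimpleGraph X) (v : X) : Set X :=
  {w | Γ.Reachable v w}

theorem component_eq_of_reachable (h : Γ.Reachable v w) : component Γ v = component Γ w :=
  Set.ext fun _ => ⟨h.symm.trans, h.trans⟩

theorem component_mono (h : Γ ≤ Γ') : component Γ v ⊆ component Γ' v :=
  fun _ hw => hw.mono h

theorem component_sup_edge_subset (ha : Γ.Reachable v a) :
    component (Γ ⊔ edge a b) v ⊆ component Γ v ∪ component Γ b := by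
  refine fun w hw => mem_of_reachable_of_closed (fun x y hxy hx => ?_) hw (Or.inl (.refl v))
  rcases hxy with hxy | hxy
  · exact hx.imp (·.trans hxy.reachable) (·.trans hxy.reachable)
  · obtain ⟨⟨rfl, rfl⟩ | ⟨rfl, rfl⟩, -⟩ := (edge_adj ..).1 hxy
    exacts [Or.inr (.refl _), Or.inl ha]

theorem component_sup_edge_eq (ha : ¬Γ.Reachable v a) (hb : ¬Γ.Reachable v b) :
    component (Γ ⊔ edge a b) v = component Γ v := by
  refine subset_antisymm
    (fun w hw => mem_of_reachable_of_closed (fun x y hxy hx => ?_) hw (.refl v))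
    (component_mono le_sup_left)
  rcases hxy with hxy | hxy
  · exact hx.trans hxy.reachable
  · obtain ⟨⟨rfl, rfl⟩ | ⟨rfl, rfl⟩, -⟩ := (edge_adj ..).1 hxy
    exacts [absurd hx ha, absurd hx hb]

end Components

/-! ### The elder rule -/

section ElderRule

variable {X : Type*} [LinearOrder X] {Γ Γ' : SimpleGraph X} {a b v w : X} {d e : Sym2 X}

/-- The subgraph of `Γ` formed by the edges that strictly precede `e`. -/
def before (Γ : SimpleGraph X) (e : Sym2 X) : SimpleGraph X :=
  Γ.deleteEdges {d | edgeKey e ≤ edgeKey d}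

/-- The subgraph of `Γ` formed by the edges that do not come after `e`. -/
def upTo (Γ : SimpleGraph X) (e : Sym2 X) : SimpleGraph X :=
  Γ.deleteEdges {d | edgeKey e < edgeKey d}

theorem before_adj : (before Γ e).Adj a b ↔ Γ.Adj a b ∧ edgeKey s(a, b) < edgeKey e := by
  simp only [before, deleteEdges_adj, Set.mem_ofPred_eq, not_le]

theorem upTo_adj : (upTo Γ e).Adj a b ↔ Γ.Adj a b ∧ edgeKey s(a, b) ≤ edgeKey e := by
  simp only [upTo, deleteEdges_adj, Set.mem_ofPred_eq, not_lt]

theorem before_mono (h : Γ ≤ Γ') : before Γ e ≤ before Γ' e :=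
  deleteEdges_mono h

theorem upTo_mono_right (h : edgeKey d ≤ edgeKey e) : upTo Γ d ≤ upTo Γ e :=
  fun _ _ hab => upTo_adj.2 ((upTo_adj.1 hab).imp_right (·.trans h))

theorem upTo_le_before (h : edgeKey d < edgeKey e) : upTo Γ d ≤ before Γ e :=
  fun _ _ hab => before_adj.2 ((upTo_adj.1 hab).imp_right (·.trans_lt h))

theorem before_le_upTo : before Γ e ≤ upTo Γ e :=
  fun _ _ hab => upTo_adj.2 ((before_adj.1 hab).imp_right le_of_lt)

theorem before_le : before Γ e ≤ Γ :=
  deleteEdges_le _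

theorem upTo_eq_before_sup_edge (hab : Γ.Adj a b) :
    upTo Γ s(a, b) = before Γ s(a, b) ⊔ edge a b := by
  ext x y
  have key_eq : edgeKey s(x, y) = edgeKey s(a, b) ↔ s(x, y) = s(a, b) := edgeKey_injective.eq_iff
  rw [sup_adj, upTo_adj, before_adj, edge_adj, le_iff_lt_or_eq, key_eq, and_or_left]
  refine or_congr_right ⟨fun h => ⟨by simpa using h.2, h.1.ne⟩, fun h => ⟨?_, by simpa using h.1⟩⟩
  rcases h.1 with ⟨rfl, rfl⟩ | ⟨rfl, rfl⟩
  exacts [hab, hab.symm]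

/-- An edge `e` is essential if both of its ends lie in infinite components of the subgraph of
the edges preceding `e`. -/
def IsEssential (Γ : SimpleGraph X) (e : Sym2 X) : Prop :=
  e ∈ Γ.edgeSet ∧ ∀ v ∈ e, (component (before Γ e) v).Infinite

/-- A vertex is an elder if it is the least vertex of a finite component. -/
def IsElder (Γ : SimpleGraph X) (v : X) : Prop :=
  (component Γ v).Finite ∧ ∀ w, Γ.Reachable v w → v ≤ w

/-- As the edges are added in increasing order, `v` is an elder until it dies at `e`: this edge
joins its component to an infinite component or to one with an older elder. -/
def Dies (Γ : SimpleGraph X) (v : X) (e : Sym2 X) : Prop :=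
  e ∈ Γ.edgeSet ∧ IsElder (before Γ e) v ∧ ¬IsElder (upTo Γ e) v

theorem IsEssential.mono (h : Γ ≤ Γ') (he : IsEssential Γ e) : IsEssential Γ' e :=
  ⟨edgeSet_mono h he.1, fun v hv => (he.2 v hv).mono (component_mono (before_mono h))⟩

theorem IsElder.anti (h : Γ ≤ Γ') (hv : IsElder Γ' v) : IsElder Γ v :=
  ⟨hv.1.subset (component_mono h), fun w hw => hv.2 w (hw.mono h)⟩

theorem IsElder.eq_of_reachable (hv : IsElder Γ v) (hw : IsElder Γ w) (h : Γ.Reachable v w) :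
    v = w :=
  le_antisymm (hv.2 w h) (hw.2 v h.symm)

theorem exists_isElder (h : (component Γ a).Finite) : ∃ v, Γ.Reachable v a ∧ IsElder Γ v := by
  obtain ⟨v, hav, hv⟩ := h.exists_minimal ⟨a, .refl a⟩
  refine ⟨v, hav.symm, component_eq_of_reachable hav ▸ h, fun w hw => ?_⟩
  exact le_of_not_gt fun hlt => hlt.not_ge (hv (hav.trans hw) hlt.le)

theorem Dies.exists_eq (h : Dies Γ v e) : ∃ a b, e = s(a, b) ∧ (before Γ e).Reachable v a := by
  obtain ⟨he, helder, hdead⟩ := h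
  induction e with | _ a b
  by_contra! hfar
  refine hdead ?_
  have hcomp := component_sup_edge_eq (hfar a b rfl) (hfar b a Sym2.eq_swap)
  rw [upTo_eq_before_sup_edge he]
  exact ⟨hcomp ▸ helder.1, fun w hw => helder.2 w (hcomp ▸ hw : w ∈ component _ v)⟩

theorem dies_iff_of_reachable (hab : Γ.Adj a b) (hva : (before Γ s(a, b)).Reachable v a) :
    Dies Γ v s(a, b) ↔ IsElder (before Γ s(a, b)) v ∧
      ((component (before Γ s(a, b)) b).Finite →
        ∃ w, (before Γ s(a, b)).Reachable b w ∧ w < v) := by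
  have hvb : (upTo Γ s(a, b)).Reachable v b :=
    (hva.mono before_le_upTo).trans (upTo_adj.2 ⟨hab, le_rfl⟩ : (upTo Γ s(a, b)).Adj a b).reachable
  have hsub := component_sup_edge_subset (b := b) hva
  rw [← upTo_eq_before_sup_edge hab] at hsub
  refine (and_iff_right hab).trans (and_congr_right fun helder => ?_)
  constructor
  · intro hdead hfin
    by_contra! hold
    exact hdead ⟨(helder.1.union hfin).subset hsub,
      fun w hw => (hsub hw).elim (helder.2 w) (hold w)⟩
  · rintro h ⟨hfin, hmin⟩
    obtain ⟨w, hbw, hwv⟩ := h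
      (hfin.subset fun w hw => hvb.trans (hw.mono before_le_upTo))
    exact hwv.not_ge (hmin w (hvb.trans (hbw.mono before_le_upTo)))

theorem Dies.edge_unique (hd : Dies Γ v d) (he : Dies Γ v e) : d = e := by
  refine edgeKey_injective (le_antisymm ?_ ?_) <;> refine le_of_not_gt fun hlt => ?_
  · exact he.2.2 (hd.2.1.anti (upTo_le_before hlt))
  · exact hd.2.2 (he.2.1.anti (upTo_le_before hlt))

theorem Dies.lt_of_reachable (hv : Dies Γ v e) (hw : Dies Γ w e) (he : e = s(a, b))
    (hva : (before Γ e).Reachable v a) (hwb : (before Γ e).Reachable w b) : w < v := by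
  subst he
  obtain ⟨x, hbx, hxv⟩ := ((dies_iff_of_reachable hv.1 hva).1 hv).2
    (component_eq_of_reachable hwb ▸ hw.2.1.1)
  exact (hw.2.1.2 x (hwb.trans hbx)).trans_lt hxv

theorem Dies.vertex_unique (hv : Dies Γ v e) (hw : Dies Γ w e) : v = w := by
  obtain ⟨a, b, hab, hva⟩ := hv.exists_eq
  obtain ⟨a', b', hab', hwa'⟩ := hw.exists_eq
  rcases Sym2.eq_iff.1 (hab.symm.trans hab') with ⟨rfl, rfl⟩ | ⟨rfl, rfl⟩
  · exact hv.2.1.eq_of_reachable hw.2.1 (hva.trans hwa'.symm)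
  · exact absurd (hv.lt_of_reachable hw hab hva hwa') (hw.lt_of_reachable hv hab' hwa' hva).not_gt

theorem Dies.not_isEssential (h : Dies Γ v e) : ¬IsEssential Γ e := by
  obtain ⟨a, b, rfl, hva⟩ := h.exists_eq
  exact fun hess => hess.2 a (Sym2.mem_mk_left a b) (component_eq_of_reachable hva ▸ h.2.1.1)

theorem exists_dies_of_finite_of_infinite (hab : Γ.Adj a b)
    (ha : (component (before Γ s(a, b)) a).Finite)
    (hb : (component (before Γ s(a, b)) b).Infinite) : ∃ v, Dies Γ v s(a, b) := by
  obtain ⟨v, hva, hv⟩ := exists_isElder ha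
  exact ⟨v, (dies_iff_of_reachable hab hva).2 ⟨hv, fun h => absurd h hb⟩⟩

theorem exists_dies_of_finite_of_finite (hab : Γ.Adj a b)
    (hdisj : ¬(before Γ s(a, b)).Reachable a b)
    (ha : (component (before Γ s(a, b)) a).Finite)
    (hb : (component (before Γ s(a, b)) b).Finite) : ∃ v, Dies Γ v s(a, b) := by
  obtain ⟨v, hva, hv⟩ := exists_isElder ha
  obtain ⟨w, hwb, hw⟩ := exists_isElder hb
  have hne : v ≠ w := fun h => hdisj (hva.symm.trans (h ▸ hwb))
  rcases hne.lt_or_gt with hlt | hlt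
  · rw [Sym2.eq_swap] at hwb hw hva ⊢
    exact ⟨w, (dies_iff_of_reachable hab.symm hwb).2 ⟨hw, fun _ => ⟨v, hva.symm, hlt⟩⟩⟩
  · exact ⟨v, (dies_iff_of_reachable hab hva).2 ⟨hv, fun _ => ⟨w, hwb.symm, hlt⟩⟩⟩

theorem exists_dies (hΓ : Γ.IsAcyclic) (he : e ∈ Γ.edgeSet) (hess : ¬IsEssential Γ e) :
    ∃ v, Dies Γ v e := by
  induction e with | _ a b
  have hbridge : ¬(before Γ s(a, b)).Reachable a b := fun h =>
    isBridge_iff.1 (isAcyclic_iff_forall_adj_isBridge.1 hΓ he)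
      (h.mono (deleteEdges_anti (Set.singleton_subset_iff.2 (le_refl (edgeKey s(a, b))))))
  by_cases ha : (component (before Γ s(a, b)) a).Finite <;>
    by_cases hb : (component (before Γ s(a, b)) b).Finite
  · exact exists_dies_of_finite_of_finite he hbridge ha hb
  · exact exists_dies_of_finite_of_infinite he ha hb
  · rw [Sym2.eq_swap] at ha hb ⊢
    exact exists_dies_of_finite_of_infinite (Γ.adj_symm he) hb ha
  · exact absurd ⟨he, Sym2.ball.2 ⟨ha, hb⟩⟩ hess

end ElderRule

section InvariantConnected

variable {G X : Type*} [Group G] [MulAction G X] {Γ : SimpleGraph X} {V : Set X}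

variable (G) in
/-- `V` and `Γ` are the vertices and the edges of a connected subgraph that is invariant under
the action of `G`. -/
structure IsInvariantConnected (Γ : SimpleGraph X) (V : Set X) : Prop where
  smul_mem : ∀ (g : G) {v}, v ∈ V → g • v ∈ V
  smul_adj : ∀ (g : G) {a b}, Γ.Adj a b → Γ.Adj (g • a) (g • b)
  support_subset : Γ.support ⊆ V
  reachable : ∀ {v w}, v ∈ V → w ∈ V → Γ.Reachable v w

namespace IsInvariantConnected

variable {a b v w : X}

theorem smul_adj_iff (h : IsInvariantConnected G Γ V) (g : G) :
    Γ.Adj (g • a) (g • b) ↔ Γ.Adj a b :=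
  ⟨fun hab => by simpa only [inv_smul_smul] using h.smul_adj g⁻¹ hab, h.smul_adj g⟩

theorem smul_mem_edgeSet_iff (h : IsInvariantConnected G Γ V) (g : G) {e : Sym2 X} :
    g • e ∈ Γ.edgeSet ↔ e ∈ Γ.edgeSet := by
  induction e with | _ a b
  exact h.smul_adj_iff g

theorem mem_of_reachable (h : IsInvariantConnected G Γ V) (hv : v ∈ V)
    (hvw : Γ.Reachable v w) : w ∈ V :=
  mem_of_reachable_of_closed
    (fun _ _ hxy _ => h.support_subset (Γ.mem_support.2 ⟨_, hxy.symm⟩)) hvw hv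

end IsInvariantConnected

end InvariantConnected

section ElderEquivariance

variable {G X : Type*} [Group G] [MulAction G X]
  {Γ Γ' : SimpleGraph X} {V : Set X} {v : X} {e : Sym2 X}

theorem component_smul {g : G} (hΓ : ∀ a b, Γ'.Adj (g • a) (g • b) ↔ Γ.Adj a b) :
    component Γ' (g • v) = (g • ·) '' component Γ v := by
  let φ : Γ ≃g Γ' := ⟨MulAction.toPerm g, hΓ _ _⟩
  refine Set.ext fun w => ⟨fun hw => ⟨g⁻¹ • w, φ.reachable_iff.1 ?_, smul_inv_smul g w⟩, ?_⟩
  · change Γ'.Reachable (g • v) (g • g⁻¹ • w)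
    rwa [smul_inv_smul]
  · rintro ⟨x, hx, rfl⟩
    exact φ.reachable_iff.2 hx

variable [LinearOrder X] [CovariantClass G X (· • ·) (· ≤ ·)]

theorem IsElder.smul {g : G} (hΓ : ∀ a b, Γ'.Adj (g • a) (g • b) ↔ Γ.Adj a b)
    (hv : IsElder Γ v) : IsElder Γ' (g • v) := by
  refine ⟨component_smul hΓ ▸ hv.1.image _, fun w (hw : w ∈ component Γ' (g • v)) => ?_⟩
  obtain ⟨x, hx, rfl⟩ := component_smul hΓ ▸ hw
  exact smul_le_smul_iff.2 (hv.2 x hx)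

namespace IsInvariantConnected

theorem before_smul_adj (h : IsInvariantConnected G Γ V) (g : G) (a b : X) :
    (before Γ (g • e)).Adj (g • a) (g • b) ↔ (before Γ e).Adj a b := by
  rw [before_adj, before_adj, h.smul_adj_iff, ← smul_sym2_mk, edgeKey_smul_lt_iff]

theorem upTo_smul_adj (h : IsInvariantConnected G Γ V) (g : G) (a b : X) :
    (upTo Γ (g • e)).Adj (g • a) (g • b) ↔ (upTo Γ e).Adj a b := by
  rw [upTo_adj, upTo_adj, h.smul_adj_iff, ← smul_sym2_mk, edgeKey_smul_le_iff]

theorem smul_dies (h : IsInvariantConnected G Γ V) (g : G) (hve : Dies Γ v e) :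
    Dies Γ (g • v) (g • e) := by
  refine ⟨(h.smul_mem_edgeSet_iff g).2 hve.1, hve.2.1.smul (h.before_smul_adj g), fun helder => ?_⟩
  refine hve.2.2 ?_
  rw [← inv_smul_smul g v]
  refine helder.smul fun a b => ?_
  rw [← h.upTo_smul_adj g, smul_inv_smul, smul_inv_smul]

end IsInvariantConnected

end ElderEquivariance

section LocalFiniteness

variable {G X : Type*} [Group G] [MulAction G X] [IsCancelSMul G X] {Γ : SimpleGraph X}

theorem finite_setOf_mem_smul (e : Sym2 X) (v : X) :
    {g : G | v ∈ g • e}.Finite := by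
  induction e with | _ a b
  have fiber_finite (x : X) : {g : G | g • x = v}.Finite :=
    Set.Subsingleton.finite fun g hg g' hg' => IsCancelSMul.right_cancel g g' x (hg.trans hg'.symm)
  refine ((fiber_finite a).union (fiber_finite b)).subset fun g hg => ?_
  exact (Sym2.mem_iff.1 hg).imp Eq.symm Eq.symm

variable (G) in
theorem finite_incidenceSet (hE : (orbits G Γ.edgeSet).Finite) (v : X) :
    (Γ.incidenceSet v).Finite := by
  refine (hE.biUnion fun q _ => (finite_setOf_mem_smul (G := G) q.out v).image (· • q.out)).subset
    fun e he => ?_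
  obtain ⟨g, hg⟩ := exists_smul_out_eq (G := G) e
  refine Set.mem_biUnion (mk_mem_orbits he.1) ⟨g, ?_, hg⟩
  exact (congrArg (v ∈ ·) hg).mpr he.2

end LocalFiniteness

section EveryVertexDies

variable {G X : Type*} [Group G] [LinearOrder X] [MulAction G X]
  {Γ : SimpleGraph X} {V : Set X} {v w x y : X} {e : Sym2 X}

/-- The vertices that at some stage of the process lie in the component of which `v` is the
elder, together with `v` itself. -/
def territory (Γ : SimpleGraph X) (v : X) : Set X :=
  {w | w = v ∨ ∃ e ∈ Γ.edgeSet, IsElder (upTo Γ e) v ∧ (upTo Γ e).Reachable v w}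

theorem le_of_mem_territory (hw : w ∈ territory Γ v) : v ≤ w := by
  obtain rfl | ⟨e, -, helder, hvw⟩ := hw
  exacts [le_rfl, helder.2 w hvw]

theorem mem_territory_of_reachable (he : e ∈ Γ.edgeSet) (helder : IsElder (upTo Γ e) v)
    (hx : x ∈ territory Γ v) (hxy : (upTo Γ e).Reachable x y) : y ∈ territory Γ v := by
  obtain rfl | ⟨d, hd, helder', hvx⟩ := hx
  · exact Or.inr ⟨e, he, helder, hxy⟩
  · rcases le_total (edgeKey d) (edgeKey e) with hle | hle
    · exact Or.inr ⟨e, he, helder, (hvx.mono (upTo_mono_right hle)).trans hxy⟩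
    · exact Or.inr ⟨d, hd, helder', hvx.trans (hxy.mono (upTo_mono_right hle))⟩

theorem territory_subset_component (helder : ¬IsElder (upTo Γ e) v) :
    territory Γ v ⊆ component (upTo Γ e) v := by
  rintro w (rfl | ⟨d, -, helder', hvw⟩)
  · exact .refl w
  · refine hvw.mono (upTo_mono_right (le_of_not_gt fun hlt => helder ?_))
    exact helder'.anti (upTo_mono_right hlt.le)

/-- The first edge leaving a finite territory would be added while `v` is still an elder, and
would kill it. -/
theorem exists_earlier_boundary_edge_of_undying (hv : ∀ e, ¬Dies Γ v e)
    (hfin : (territory Γ v).Finite) (hxy : Γ.Adj x y) (hx : x ∈ territory Γ v)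
    (hy : y ∉ territory Γ v) :
    ∃ a b, Γ.Adj a b ∧ a ∈ territory Γ v ∧ b ∉ territory Γ v ∧
      edgeKey s(a, b) < edgeKey s(x, y) := by
  by_contra! hleast
  have hcomp : component (before Γ s(x, y)) v ⊆ territory Γ v := fun w hw =>
    mem_of_reachable_of_closed (fun a b hab ha => by_contra fun hb =>
      (before_adj.1 hab).2.not_ge (hleast a b (before_adj.1 hab).1 ha hb)) hw (Or.inl rfl)
  have helder : IsElder (before Γ s(x, y)) v :=
    ⟨hfin.subset hcomp, fun w hw => le_of_mem_territory (hcomp hw)⟩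
  have hlater : IsElder (upTo Γ s(x, y)) v := by_contra fun h => hv s(x, y) ⟨hxy, helder, h⟩
  exact hy (mem_territory_of_reachable hxy hlater hx
    (upTo_adj.2 ⟨hxy, le_rfl⟩ : (upTo Γ s(x, y)).Adj x y).reachable)

theorem exists_first_boundary_edge {T : Set X} (hfin : T.Finite)
    (hloc : ∀ x ∈ T, (Γ.incidenceSet x).Finite) (hxy : Γ.Adj x y) (hx : x ∈ T) (hy : y ∉ T) :
    ∃ a b, (Γ.Adj a b ∧ a ∈ T ∧ b ∉ T) ∧
      ∀ c d, Γ.Adj c d → c ∈ T → d ∉ T → edgeKey s(a, b) ≤ edgeKey s(c, d) := by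
  have hboundary : {e | ∃ a b, (Γ.Adj a b ∧ a ∈ T ∧ b ∉ T) ∧ s(a, b) = e}.Finite := by
    refine (hfin.biUnion hloc).subset ?_
    rintro _ ⟨a, b, ⟨hab, ha, -⟩, rfl⟩
    exact Set.mem_biUnion ha (Γ.mk'_mem_incidenceSet_left_iff.2 hab)
  obtain ⟨_, ⟨a, b, hab, rfl⟩, hmin⟩ :=
    Set.exists_min_image _ edgeKey hboundary ⟨s(x, y), x, y, ⟨hxy, hx, hy⟩, rfl⟩
  exact ⟨a, b, hab, fun c d hcd hc hd => hmin _ ⟨c, d, ⟨hcd, hc, hd⟩, rfl⟩⟩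

variable [CovariantClass G X (· • ·) (· ≤ ·)]

/-- The stage at which `g • w` joins `g • v` is one of the stages of `territory Γ v`: otherwise
that whole infinite set would lie in a translate of a finite component. -/
theorem smul_mem_territory (h : IsInvariantConnected G Γ V) (hinf : (territory Γ v).Infinite)
    {g : G} (hw : w ∈ territory Γ v) (hgw : g • w ∈ territory Γ v) :
    g • v ∈ territory Γ v := by
  obtain rfl | ⟨e, he, helder, hvw⟩ := hw
  · exact hgw
  have hcomp : component (upTo Γ (g • e)) (g • v) = (g • ·) '' component (upTo Γ e) v :=
    component_smul (h.upTo_smul_adj g)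
  have hreach : g • w ∈ component (upTo Γ (g • e)) (g • v) := hcomp ▸ ⟨w, hvw, rfl⟩
  by_cases hge : IsElder (upTo Γ (g • e)) v
  · exact mem_territory_of_reachable ((h.smul_mem_edgeSet_iff g).2 he) hge hgw
      (Reachable.symm hreach)
  · have hsub := territory_subset_component hge
    rw [component_eq_of_reachable (hsub hgw), ← component_eq_of_reachable hreach, hcomp] at hsub
    exact absurd ((helder.1.image _).subset hsub) hinf

variable [IsCancelSMul G X]

theorem eq_one_of_smul_mem_territory {g : G} (hg : g • v ∈ territory Γ v)
    (hg' : g⁻¹ • v ∈ territory Γ v) : g = 1 := by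
  have hle : g • v ≤ v := by
    simpa only [smul_inv_smul] using smul_mono_right g (le_of_mem_territory hg')
  exact IsCancelSMul.eq_one_of_smul (hle.antisymm (le_of_mem_territory hg))

theorem infinite_territory_of_undying [Nontrivial G] (h : IsInvariantConnected G Γ V)
    (hE : (orbits G Γ.edgeSet).Finite) (hvV : v ∈ V) (hv : ∀ e, ¬Dies Γ v e) :
    (territory Γ v).Infinite := by
  intro hfin
  have hboundary : ∃ x y, Γ.Adj x y ∧ x ∈ territory Γ v ∧ y ∉ territory Γ v := by
    by_contra! hclosed
    obtain ⟨g, hg⟩ := exists_ne (1 : G)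
    have hmem (g : G) : g • v ∈ territory Γ v :=
      mem_of_reachable_of_closed hclosed (h.reachable hvV (h.smul_mem g hvV)) (Or.inl rfl)
    exact hg (eq_one_of_smul_mem_territory (hmem g) (hmem g⁻¹))
  obtain ⟨x, y, hxy, hx, hy⟩ := hboundary
  obtain ⟨a, b, ⟨hab, ha, hb⟩, hmin⟩ :=
    exists_first_boundary_edge hfin (fun x _ => finite_incidenceSet G hE x) hxy hx hy
  obtain ⟨c, d, hcd, hc, hd, hlt⟩ := exists_earlier_boundary_edge_of_undying hv hfin hab ha hb
  exact hlt.not_ge (hmin c d hcd hc hd)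

theorem exists_dies_of_mem [Nontrivial G] (h : IsInvariantConnected G Γ V)
    (hV : (orbits G V).Finite) (hE : (orbits G Γ.edgeSet).Finite) (hvV : v ∈ V) :
    ∃ e, Dies Γ v e := by
  by_contra! hv
  have hinf := infinite_territory_of_undying h hE hvV hv
  have hsub : territory Γ v ⊆ V := by
    rintro w (rfl | ⟨e, -, -, hvw⟩)
    exacts [hvV, h.mem_of_reachable hvV (hvw.mono (deleteEdges_le _))]
  obtain ⟨x, hx, y, hy, hne, hxy⟩ :=
    hinf.exists_ne_map_eq_of_mapsTo (fun _ hw => mk_mem_orbits (hsub hw)) hV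
  obtain ⟨g, rfl⟩ := mk_eq_mk_iff.1 hxy
  have hg := smul_mem_territory h hinf hy hx
  have hg' : g⁻¹ • v ∈ territory Γ v :=
    smul_mem_territory h hinf hx (by rwa [inv_smul_smul])
  exact hne (by rw [eq_one_of_smul_mem_territory hg hg', one_smul])

end EveryVertexDies

section EssentialCount

variable {G X : Type*} [Group G] [LinearOrder X] [MulAction G X]
  [CovariantClass G X (· • ·) (· ≤ ·)] {Γ : SimpleGraph X} {V : Set X}

theorem encard_orbits_edgeSet_le (hΓ : Γ.IsAcyclic) (h : IsInvariantConnected G Γ V) :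
    (orbits G Γ.edgeSet).encard ≤
      (orbits G V).encard + (orbits G {e | IsEssential Γ e}).encard := by
  have hnon : (orbits G {e ∈ Γ.edgeSet | ¬IsEssential Γ e}).encard ≤ (orbits G V).encard := by
    refine encard_orbits_le_of_rel (fun e v => Dies Γ v e) (fun g => h.smul_dies g)
      (fun e he => ?_) Dies.edge_unique
    obtain ⟨v, hv⟩ := exists_dies hΓ he.1 he.2
    obtain ⟨a, b, rfl, hva⟩ := hv.exists_eq
    exact ⟨v, h.mem_of_reachable (h.support_subset (Γ.mem_support.2 ⟨b, he.1⟩))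
      (hva.mono before_le).symm, hv⟩
  refine (Set.encard_le_encard (t := _ ∪ _) ?_).trans
    ((Set.encard_union_le _ _).trans (add_le_add_left hnon _))
  rintro _ ⟨e, he, rfl⟩
  by_cases hess : IsEssential Γ e
  exacts [Or.inr (mk_mem_orbits hess), Or.inl (mk_mem_orbits ⟨he, hess⟩)]

theorem encard_orbits_add_essential_le [IsCancelSMul G X] [Nontrivial G]
    (h : IsInvariantConnected G Γ V) (hV : (orbits G V).Finite)
    (hE : (orbits G Γ.edgeSet).Finite) :
    (orbits G V).encard + (orbits G {e | IsEssential Γ e}).encard ≤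
      (orbits G Γ.edgeSet).encard := by
  have hdies : (orbits G V).encard ≤ (orbits G {e | ∃ v, Dies Γ v e}).encard :=
    encard_orbits_le_of_rel (Dies Γ) (fun g => h.smul_dies g)
      (fun v hv => (exists_dies_of_mem h hV hE hv).imp fun _ he => ⟨⟨v, he⟩, he⟩)
      Dies.vertex_unique
  have hdisj : Disjoint (orbits G {e | ∃ v, Dies Γ v e}) (orbits G {e | IsEssential Γ e}) := by
    rw [Set.disjoint_left]
    rintro _ ⟨d, ⟨v, hvd⟩, rfl⟩ ⟨e, he, heq⟩
    obtain ⟨g, rfl⟩ := mk_eq_mk_iff.1 heq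
    exact (h.smul_dies g hvd).not_isEssential he
  refine (add_le_add_left hdies _).trans ?_
  rw [← Set.encard_union_eq hdisj]
  refine Set.encard_le_encard (Set.union_subset ?_ ?_) <;> rintro _ ⟨e, he, rfl⟩
  · obtain ⟨v, hv⟩ := he
    exact mk_mem_orbits hv.1
  · exact mk_mem_orbits he.1

end EssentialCount

section Construction

variable {G X : Type*} [Group G] [MulAction G X] {T Γ Γ' : SimpleGraph X} {V V' : Set X}

theorem IsInvariantConnected.inf {H K : Subgroup G} (hT : T.IsAcyclic) (hΓT : Γ ≤ T)
    (hΓT' : Γ' ≤ T) (h : IsInvariantConnected H Γ V) (h' : IsInvariantConnected K Γ' V') :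
    IsInvariantConnected ↥(H ⊓ K) (Γ ⊓ Γ') (V ∩ V') where
  smul_mem g _ hv := ⟨h.smul_mem ⟨g, g.2.1⟩ hv.1, h'.smul_mem ⟨g, g.2.2⟩ hv.2⟩
  smul_adj g _ _ hab := ⟨h.smul_adj ⟨g, g.2.1⟩ hab.1, h'.smul_adj ⟨g, g.2.2⟩ hab.2⟩
  support_subset := fun _ ⟨w, hw⟩ => ⟨h.support_subset ⟨w, hw.1⟩, h'.support_subset ⟨w, hw.2⟩⟩
  reachable {v w} hv hw := by
    obtain ⟨p, hp⟩ := (h.reachable hv.1 hw.1).exists_isPath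
    obtain ⟨q, hq⟩ := (h'.reachable hv.2 hw.2).exists_isPath
    have hpq : p.mapLe hΓT = q.mapLe hΓT' := congrArg Subtype.val
      ((hT.subsingleton_path v w).elim ⟨_, hp.mapLe hΓT⟩ ⟨_, hq.mapLe hΓT'⟩)
    have hedges : p.edges = q.edges := by
      simpa only [Walk.edges_mapLe_eq_edges] using congrArg Walk.edges hpq
    refine (p.transfer (Γ ⊓ Γ') fun e he => ?_).reachable
    exact edgeSet_inf Γ Γ' ▸ ⟨p.edges_subset_edgeSet he, q.edges_subset_edgeSet (hedges ▸ he)⟩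

theorem finite_orbits_of_smul_mem {s t : Set X} (ht : t.Finite)
    (hst : ∀ a ∈ s, ∃ g : G, g • a ∈ t) : (orbits G s).Finite := by
  refine (ht.image (Quotient.mk (orbitRel G X))).subset ?_
  rintro _ ⟨a, ha, rfl⟩
  obtain ⟨g, hg⟩ := hst a ha
  exact ⟨g • a, hg, mk_eq_mk_iff.2 ⟨g, rfl⟩⟩

theorem smul_reachable (hΓ : ∀ (g : G) {a b}, Γ.Adj a b → Γ.Adj (g • a) (g • b)) (g : G)
    {v w : X} (hvw : Γ.Reachable v w) : Γ.Reachable (g • v) (g • w) :=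
  hvw.map (⟨(g • ·), hΓ g⟩ : Γ →g Γ)

theorem reachable_smul_of_closure_eq_top
    (hΓ : ∀ (g : G) {a b}, Γ.Adj a b → Γ.Adj (g • a) (g • b)) {S : Set G}
    (hS : Subgroup.closure S = ⊤) {x₀ : X} (hx₀ : ∀ s ∈ S, Γ.Reachable x₀ (s • x₀)) (g : G) :
    Γ.Reachable x₀ (g • x₀) := by
  have hg : g ∈ Subgroup.closure S := hS ▸ Subgroup.mem_top g
  induction hg using Subgroup.closure_induction with
  | mem s hs => exact hx₀ s hs
  | one => rw [one_smul]
  | mul g g' _ _ hg hg' =>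
    rw [mul_smul]
    exact hg.trans (smul_reachable hΓ g hg')
  | inv g _ hg => simpa only [inv_smul_smul] using (smul_reachable hΓ g⁻¹ hg).symm

/-- The union of the translates of the walks `p s` with `s ∈ S`, as a graph. -/
def translates {x₀ : X} (S : Set G) (p : ∀ g : G, T.Walk x₀ (g • x₀)) : SimpleGraph X :=
  fromEdgeSet {e | ∃ g : G, ∃ s ∈ S, g • e ∈ (p s).edges}

section Translates

variable {x₀ : X} {S : Set G} {p : ∀ g : G, T.Walk x₀ (g • x₀)}

theorem translates_le (hT : ∀ (g : G) {a b}, T.Adj a b → T.Adj (g • a) (g • b)) :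
    translates S p ≤ T := by
  intro a b hab
  obtain ⟨⟨g, s, -, hgs⟩, -⟩ := (fromEdgeSet_adj _).1 hab
  simpa only [inv_smul_smul] using hT g⁻¹ ((p s).adj_of_mem_edges hgs)

theorem translates_smul_adj (g : G) {a b : X} (hab : (translates S p).Adj a b) :
    (translates S p).Adj (g • a) (g • b) := by
  obtain ⟨⟨k, s, hs, hks⟩, hne⟩ := (fromEdgeSet_adj _).1 hab
  refine (fromEdgeSet_adj _).2 ⟨⟨k * g⁻¹, s, hs, ?_⟩, (MulAction.injective g).ne hne⟩
  rwa [← smul_sym2_mk, mul_smul, inv_smul_smul]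

theorem translates_reachable {s : G} (hs : s ∈ S) {v : X} (hv : v ∈ (p s).support) :
    (translates S p).Reachable x₀ v := by
  classical
  refine (((p s).takeUntil v hv).transfer (translates S p) fun e he => ?_).reachable
  have hes := (p s).edges_takeUntil_subset_edges hv he
  refine (edgeSet_fromEdgeSet _).ge ⟨⟨1, s, hs, (one_smul G e).symm ▸ hes⟩, ?_⟩
  exact T.not_isDiag_of_mem_edgeSet ((p s).edges_subset_edgeSet hes)

theorem isInvariantConnected_translates (hS : Subgroup.closure S = ⊤) :
    IsInvariantConnected G (translates S p) {v | ∃ g : G, ∃ s ∈ S, g • v ∈ (p s).support} where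
  smul_mem g v := fun ⟨k, s, hs, hv⟩ =>
    ⟨k * g⁻¹, s, hs, by rwa [mul_smul, inv_smul_smul]⟩
  smul_adj g _ _ hab := translates_smul_adj g hab
  support_subset := by
    rintro a ⟨b, hab⟩
    obtain ⟨⟨g, s, hs, hgs⟩, -⟩ := (fromEdgeSet_adj _).1 hab
    exact ⟨g, s, hs, (p s).fst_mem_support_of_mem_edges hgs⟩
  reachable {v w} := by
    have reachable_base : ∀ v, (∃ g : G, ∃ s ∈ S, g • v ∈ (p s).support) →
        (translates S p).Reachable x₀ v := by
      rintro v ⟨g, s, hs, hv⟩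
      have hbase := reachable_smul_of_closure_eq_top translates_smul_adj hS
        (fun s hs => translates_reachable (p := p) hs (p s).end_mem_support) g⁻¹
      refine hbase.trans ?_
      simpa only [inv_smul_smul] using
        smul_reachable translates_smul_adj g⁻¹ (translates_reachable hs hv)
    exact fun hv hw => (reachable_base v hv).symm.trans (reachable_base w hw)

end Translates

theorem exists_cofinite_hull (hT : T.Connected)
    (hTG : ∀ (g : G) {a b}, T.Adj a b → T.Adj (g • a) (g • b)) {S : Set G} (hSfin : S.Finite)
    (hS : Subgroup.closure S = ⊤) (x₀ : X) :
    ∃ (Γ : SimpleGraph X) (V : Set X), Γ ≤ T ∧ x₀ ∈ V ∧ IsInvariantConnected G Γ V ∧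
      (orbits G V).Finite ∧ (orbits G Γ.edgeSet).Finite := by
  obtain ⟨S', hS'fin, hS', hone⟩ : ∃ S' : Set G, S'.Finite ∧ Subgroup.closure S' = ⊤ ∧ 1 ∈ S' :=
    ⟨insert 1 S, hSfin.insert 1, (Subgroup.closure_insert_one S).trans hS, Set.mem_insert 1 S⟩
  have p (g : G) : T.Walk x₀ (g • x₀) := (hT.preconnected x₀ (g • x₀)).some
  refine ⟨translates S' p, {v | ∃ g : G, ∃ s ∈ S', g • v ∈ (p s).support}, translates_le hTG,
    ⟨1, 1, hone, (p 1).end_mem_support⟩, isInvariantConnected_translates hS', ?_, ?_⟩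
  · refine finite_orbits_of_smul_mem
      (hS'fin.biUnion fun s _ => (p s).support.finite_toSet) fun v ⟨g, s, hs, hv⟩ => ?_
    exact ⟨g, Set.mem_biUnion hs hv⟩
  · refine finite_orbits_of_smul_mem
      (hS'fin.biUnion fun s _ => (p s).edges.finite_toSet) fun e he => ?_
    obtain ⟨⟨g, s, hs, hgs⟩, -⟩ := (edgeSet_fromEdgeSet _).le he
    exact ⟨g, Set.mem_biUnion hs hgs⟩

end Construction

section Potential

variable {X : Type*} {Γ : SimpleGraph X}

/-- `f` is a potential, with coefficients in `ZMod 2`, of the function `φ` on the edges of `Γ`: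
modulo `2` the sum of its values at the ends of an edge is also their difference, so edges need no
orientation. -/
def IsPotential (Γ : SimpleGraph X) (φ : Sym2 X → ZMod 2) (f : X → ZMod 2) : Prop :=
  ∀ a b, Γ.Adj a b → f a + f b = φ s(a, b)

theorem IsPotential.sub {φ φ' : Sym2 X → ZMod 2} {f f' : X → ZMod 2} (hf : IsPotential Γ φ f)
    (hf' : IsPotential Γ φ' f') : IsPotential Γ (φ - φ') (f - f') := fun a b hab => by
  rw [Pi.sub_apply, Pi.sub_apply, Pi.sub_apply, ← hf a b hab, ← hf' a b hab, add_sub_add_comm]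

theorem exists_isPotential (hΓ : Γ.IsAcyclic) {x₀ : X}
    (hx₀ : ∀ v ∈ Γ.support, Γ.Reachable x₀ v) (φ : Sym2 X → ZMod 2) (c : ZMod 2) :
    ∃ f, f x₀ = c ∧ IsPotential Γ φ f := by
  classical
  let f : X → ZMod 2 := fun v =>
    if hv : Γ.Reachable x₀ v then c + (hv.exists_isPath.choose.edges.map φ).sum else 0
  have f_eq {v : X} (q : Γ.Walk x₀ v) (hq : q.IsPath) : f v = c + (q.edges.map φ).sum := by
    have hv : Γ.Reachable x₀ v := q.reachable
    have hpath : hv.exists_isPath.choose = q := congrArg Subtype.val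
      ((hΓ.subsingleton_path x₀ v).elim ⟨_, hv.exists_isPath.choose_spec⟩ ⟨q, hq⟩)
    rw [show f v = _ from dif_pos hv, hpath]
  have f_concat {a b : X} {p : Γ.Walk x₀ a} {q : Γ.Walk x₀ b} (hp : p.IsPath) (hq : q.IsPath)
      (hab : Γ.Adj a b) (ha : a ∈ q.support) : f a + f b = φ s(a, b) := by
    have hsum : (q.edges.map φ).sum = (p.edges.map φ).sum + φ s(a, b) := by
      rw [hΓ.path_concat hp hq hab ha, Walk.edges_concat, List.concat_eq_append, List.map_append,
        List.sum_append, List.map_singleton, List.sum_singleton]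
    rw [f_eq p hp, f_eq q hq, hsum, ← add_assoc c, ← add_assoc, CharTwo.add_self_eq_zero, zero_add]
  refine ⟨f, by simpa using f_eq .nil .nil, fun a b hab => ?_⟩
  obtain ⟨p, hp⟩ := (hx₀ a ⟨b, hab⟩).exists_isPath
  obtain ⟨q, hq⟩ := (hx₀ b ⟨a, hab.symm⟩).exists_isPath
  by_cases haq : a ∈ q.support
  · exact f_concat hp hq hab haq
  · rw [add_comm, Sym2.eq_swap]
    exact f_concat hq hp hab.symm
      (hΓ.mem_support_of_ne_mem_support_of_adj_of_isPath hp hq hab haq)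

end Potential

/-! ### Euler characteristics of free quotients -/

section EulerUpperBound

variable {G X : Type*} [Group G] [MulAction G X] {Γ : SimpleGraph X} {V : Set X} {x₀ : X}
  {f f' : X → ZMod 2} {φ φ' : Sym2 X → ZMod 2}

theorem IsPotential.sub_smul_eq (hf : IsPotential Γ φ f) (h : IsInvariantConnected G Γ V)
    (hφ : ∀ (g : G) e, φ (g • e) = φ e) (g : G) {v w : X} (hv : v ∈ V) (hw : w ∈ V) :
    f (g • v) - f v = f (g • w) - f w := by
  refine mem_of_reachable_of_closed (s := {v | f (g • v) - f v = f (g • w) - f w})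
    (fun a b hab (ha : _ = _) => ?_) (h.reachable hw hv) rfl
  have hsum : f (g • a) + f (g • b) = f a + f b := by
    rw [hf _ _ hab, hf _ _ (h.smul_adj g hab), ← smul_sym2_mk, hφ]
  have two_eq_zero : (2 : ZMod 2) = 0 := rfl
  change f (g • b) - f b = f (g • w) - f w
  linear_combination hsum + ha + (f a - f (g • a)) * two_eq_zero

theorem IsPotential.eq_zero (hf : IsPotential Γ φ f) (h : IsInvariantConnected G Γ V)
    (hφ : ∀ (g : G) e, φ (g • e) = φ e) (hx₀ : x₀ ∈ V) {S : Set G}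
    (hS : Subgroup.closure S = ⊤) (hfS : ∀ s ∈ S, f (s • x₀) - f x₀ = 0)
    (hfV : ∀ q ∈ orbits G V, f q.out = 0) {v : X} (hv : v ∈ V) : f v = 0 := by
  have hsub (g : G) {v : X} (hv : v ∈ V) := hf.sub_smul_eq h hφ g hv hx₀
  have hfix (g : G) : f (g • x₀) - f x₀ = 0 := by
    have hg : g ∈ Subgroup.closure S := hS ▸ Subgroup.mem_top g
    induction hg using Subgroup.closure_induction with
    | mem s hs => exact hfS s hs
    | one => rw [one_smul, sub_self]
    | mul g g' _ _ hg hg' =>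
      rw [mul_smul, ← sub_add_sub_cancel, hsub g (h.smul_mem g' hx₀), hg, hg', add_zero]
    | inv g _ hg =>
      rw [← hsub g (h.smul_mem g⁻¹ hx₀), smul_inv_smul, sub_eq_zero] at hg
      rw [hg, sub_self]
  obtain ⟨g, hg⟩ := exists_smul_out_eq (G := G) v
  have hout := out_mem_of_mem_orbits (fun g _ hv => h.smul_mem g hv) (mk_mem_orbits (G := G) hv)
  rw [← hg, sub_eq_zero.1 ((hsub g hout).trans (hfix g)), hfV _ (mk_mem_orbits hv)]

theorem IsPotential.eqOn (hf : IsPotential Γ φ f) (hf' : IsPotential Γ φ' f')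
    (h : IsInvariantConnected G Γ V) (hφ : ∀ (g : G) e, φ (g • e) = φ e)
    (hφ' : ∀ (g : G) e, φ' (g • e) = φ' e) (hx₀ : x₀ ∈ V) {S : Set G}
    (hS : Subgroup.closure S = ⊤) (hfS : ∀ s ∈ S, f (s • x₀) - f x₀ = f' (s • x₀) - f' x₀)
    (hfV : ∀ q ∈ orbits G V, f q.out = f' q.out) : Set.EqOn f f' V := fun v hv => by
  refine sub_eq_zero.1 ((hf.sub hf').eq_zero h (fun g e => ?_) hx₀ hS (fun s hs => ?_)
    (fun q hq => sub_eq_zero.2 (hfV q hq)) hv)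
  · rw [Pi.sub_apply, Pi.sub_apply, hφ, hφ']
  · rw [Pi.sub_apply, Pi.sub_apply, sub_sub_sub_comm, hfS s hs, sub_self]

theorem ncard_orbits_edgeSet_add_one_le (hΓ : Γ.IsAcyclic) (h : IsInvariantConnected G Γ V)
    (hx₀ : x₀ ∈ V) {S : Finset G} (hS : Subgroup.closure (S : Set G) = ⊤)
    (hV : (orbits G V).Finite) (hE : (orbits G Γ.edgeSet).Finite) :
    (orbits G Γ.edgeSet).ncard + 1 ≤ S.card + (orbits G V).ncard := by
  have := hV.to_subtype
  have := hE.to_subtype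
  let extend (ψ : orbits G Γ.edgeSet → ZMod 2) (e : Sym2 X) : ZMod 2 :=
    Function.extend Subtype.val ψ 0 (Quotient.mk (orbitRel G (Sym2 X)) e)
  have extend_smul (ψ) (g : G) (e) : extend ψ (g • e) = extend ψ e :=
    congrArg (Function.extend Subtype.val ψ 0) (mk_eq_mk_iff.2 ⟨g, rfl⟩)
  choose f hf_base hf using fun ψ => exists_isPotential hΓ (x₀ := x₀)
    (fun v hv => h.reachable hx₀ (h.support_subset hv)) (extend ψ)
  let restrict (p : (orbits G Γ.edgeSet → ZMod 2) × ZMod 2) :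
      (S → ZMod 2) × (orbits G V → ZMod 2) :=
    (fun s => f p.1 p.2 (s.1 • x₀) - f p.1 p.2 x₀, fun q => f p.1 p.2 q.1.out)
  have restrict_injective : Function.Injective restrict := by
    rintro ⟨ψ, c⟩ ⟨ψ', c'⟩ heq
    have f_eq : Set.EqOn (f ψ c) (f ψ' c') V :=
      (hf ψ c).eqOn (hf ψ' c') h (extend_smul ψ) (extend_smul ψ') hx₀ hS
        (fun s hs => congrFun (congrArg Prod.fst heq) ⟨s, hs⟩)
        (fun q hq => congrFun (congrArg Prod.snd heq) ⟨q, hq⟩)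
    refine Prod.ext (funext fun ⟨q, e, he, hq⟩ => ?_) ?_
    · induction e with | _ a b
      have h_extend : extend ψ s(a, b) = extend ψ' s(a, b) := by
        rw [← hf ψ c a b he, ← hf ψ' c' a b he, f_eq (h.support_subset ⟨b, he⟩),
          f_eq (h.support_subset ⟨a, he.symm⟩)]
      subst hq
      simpa only [extend, Subtype.val_injective.extend_apply _ _ ⟨_, mk_mem_orbits he⟩]
        using h_extend
    · rw [← hf_base ψ c, ← hf_base ψ' c', f_eq hx₀]
  have hcard := Nat.card_le_card_of_injective restrict restrict_injective
  simp only [Nat.card_prod, Nat.card_fun, Nat.card_zmod, ← pow_succ, ← pow_add] at hcard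
  simpa [Set.ncard] using (Nat.pow_le_pow_iff_right one_lt_two).1 hcard

end EulerUpperBound

section Generators

variable {G X : Type*} [Group G] [MulAction G X] {Γ : SimpleGraph X} {V D : Set X} {x₀ : X}

theorem IsInvariantConnected.eq_top_of_edges_mem_translates [IsCancelSMul G X]
    (h : IsInvariantConnected G Γ V) (hDV : D ⊆ V)
    (hD : D.InjOn (Quotient.mk (orbitRel G X))) (hx₀ : x₀ ∈ D) {K : Subgroup G}
    (hK : ∀ e ∈ Γ.edgeSet, ∃ g : G, ∃ k ∈ K, ∃ a ∈ D, ∃ b ∈ D, g • s(a, k • b) = e) :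
    K = ⊤ := by
  have eq_of_smul_eq {g k : G} {a b : X} (ha : a ∈ D) (hb : b ∈ D) (hab : g • a = k • b) :
      a = b ∧ g = k := by
    obtain rfl : a = b :=
      hD ha hb (mk_eq_mk_iff.2 ⟨g⁻¹ * k, by rw [mul_smul, ← hab, inv_smul_smul]⟩)
    exact ⟨rfl, IsCancelSMul.right_cancel _ _ _ hab⟩
  have translates_closed : ∀ x y, Γ.Adj x y → (∃ k ∈ K, ∃ a ∈ D, k • a = x) →
      ∃ k ∈ K, ∃ a ∈ D, k • a = y := by
    rintro _ y hxy ⟨k, hk, c, hc, rfl⟩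
    obtain ⟨g, l, hl, a, ha, b, hb, he⟩ := hK s(k • c, y) hxy
    rw [smul_sym2_mk, ← mul_smul, Sym2.eq_iff] at he
    obtain ⟨hac, hby⟩ | ⟨hay, hbc⟩ := he
    · obtain ⟨-, rfl⟩ := eq_of_smul_eq ha hc hac
      exact ⟨g * l, K.mul_mem hk hl, b, hb, hby⟩
    · obtain ⟨-, hgl⟩ := eq_of_smul_eq hb hc hbc
      exact ⟨g, (K.mul_mem_cancel_right hl).1 (hgl ▸ hk), a, ha, hay⟩
  refine (Subgroup.eq_top_iff' K).2 fun g => ?_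
  obtain ⟨k, hk, a, ha, hka⟩ := mem_of_reachable_of_closed
    (s := {x | ∃ k ∈ K, ∃ a ∈ D, k • a = x}) translates_closed
    (h.reachable (hDV hx₀) (h.smul_mem g (hDV hx₀))) ⟨1, K.one_mem, x₀, hx₀, one_smul G x₀⟩
  exact (eq_of_smul_eq ha hx₀ hka).2 ▸ hk

theorem IsInvariantConnected.exists_adj_notMem_orbits (h : IsInvariantConnected G Γ V)
    (hDV : D ⊆ V) (hx₀ : x₀ ∈ D) (hD : orbits G D ≠ orbits G V) :
    ∃ a ∈ D, ∃ b ∈ V, Γ.Adj a b ∧ (Quotient.mk _ b : orbitRel.Quotient G X) ∉ orbits G D := by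
  by_contra! hclosed
  refine hD ((Set.image_mono hDV).antisymm ?_)
  rintro _ ⟨v, hv, rfl⟩
  refine mem_of_reachable_of_closed
    (s := {v | (Quotient.mk _ v : orbitRel.Quotient G X) ∈ orbits G D})
    (fun x y hxy hx => ?_) (h.reachable (hDV hx₀) hv) (mk_mem_orbits hx₀)
  obtain ⟨a, ha, hax⟩ := hx
  obtain ⟨g, rfl⟩ := mk_eq_mk_iff.1 hax
  have hgy := hclosed _ ha _ (h.smul_mem g (h.support_subset ⟨_, hxy.symm⟩)) (h.smul_adj g hxy)
  rwa [mk_eq_mk_iff.2 ⟨g, rfl⟩] at hgy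

theorem IsInvariantConnected.exists_connected_transversal (h : IsInvariantConnected G Γ V)
    (hx₀ : x₀ ∈ V) (hV : (orbits G V).Finite) :
    ∃ D ⊆ V, x₀ ∈ D ∧ (Γ.induce D).Connected ∧ D.InjOn (Quotient.mk (orbitRel G X)) ∧
      orbits G D = orbits G V := by
  have singleton_connected (x : X) : (Γ.induce {x}).Connected := ⟨.of_subsingleton⟩
  let P : Set (Set X) := {D | D ⊆ V ∧ x₀ ∈ D ∧ (Γ.induce D).Connected ∧
    D.InjOn (Quotient.mk (orbitRel G X))}
  have hfin : (orbits G '' P).Finite :=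
    hV.finite_subsets.subset (Set.image_subset_iff.2 fun D hD => Set.image_mono hD.1)
  obtain ⟨D, ⟨hDV, hxD, hconn, hinj⟩, hmax⟩ := Set.Finite.exists_maximalFor' (orbits G) P hfin
    ⟨{x₀}, Set.singleton_subset_iff.2 hx₀, rfl, singleton_connected x₀,
      Set.injOn_singleton _ _⟩
  refine ⟨D, hDV, hxD, hconn, hinj, ?_⟩
  by_contra hne
  obtain ⟨a, ha, b, hb, hab, hbD⟩ := h.exists_adj_notMem_orbits hDV hxD hne
  have hbD' : b ∉ D := fun hb => hbD (mk_mem_orbits hb)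
  have hinsert : insert b D ∈ P := by
    refine ⟨Set.insert_subset hb hDV, Or.inr hxD, ?_, (Set.injOn_insert hbD').2 ⟨hinj, hbD⟩⟩
    exact connected_induce_union (singleton_connected b).preconnected hconn.preconnected
      rfl ha hab.symm
  exact hbD (hmax hinsert (Set.image_mono (Set.subset_insert b D))
    (mk_mem_orbits (Set.mem_insert b D)))

theorem ncard_le_ncard_orbits_induce_edgeSet_add_one (hconn : (Γ.induce D).Connected)
    (hDfin : D.Finite) (hD : D.InjOn (Quotient.mk (orbitRel G X))) :
    D.ncard ≤ (orbits G (Sym2.map Subtype.val '' (Γ.induce D).edgeSet)).ncard + 1 := by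
  have := hDfin.to_subtype
  have hinj : (Sym2.map Subtype.val '' (Γ.induce D).edgeSet).InjOn
      (Quotient.mk (orbitRel G (Sym2 X))) := by
    rintro _ ⟨e, he, rfl⟩ _ ⟨e', he', rfl⟩ hee'
    obtain ⟨g, hg⟩ := mk_eq_mk_iff.1 hee'
    induction e with | _ a b
    induction e' with | _ a' b'
    have eq_of_smul_eq {x y : D} (hxy : g • x.1 = y) : x = y :=
      Subtype.ext (hD x.2 y.2 (mk_eq_mk_iff.2 ⟨g, hxy⟩).symm)
    obtain ⟨ha, hb⟩ | ⟨ha, hb⟩ := Sym2.eq_iff.1 hg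
    · rw [eq_of_smul_eq ha, eq_of_smul_eq hb]
    · rw [eq_of_smul_eq ha, eq_of_smul_eq hb, Sym2.eq_swap]
  have := hconn.card_vert_le_card_edgeSet_add_one
  rwa [Nat.card_coe_set_eq, Nat.card_coe_set_eq, ← Set.ncard_image_of_injective
    (Γ.induce D).edgeSet (Sym2.map.injective Subtype.val_injective), ← hinj.ncard_image] at this

theorem exists_smul_mem_of_orbits_eq (hD : orbits G D = orbits G V) {v : X} (hv : v ∈ V) :
    ∃ g : G, ∃ a ∈ D, g • a = v := by
  obtain ⟨a, ha, hav⟩ := hD.ge (mk_mem_orbits hv)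
  obtain ⟨g, hg⟩ := mk_eq_mk_iff.1 hav.symm
  exact ⟨g, a, ha, hg⟩

theorem IsInvariantConnected.exists_label (h : IsInvariantConnected G Γ V)
    (hD : orbits G D = orbits G V) {q : orbitRel.Quotient G (Sym2 X)}
    (hq : q ∈ orbits G Γ.edgeSet) :
    ∃ k : G, (∃ a ∈ D, ∃ b ∈ D, Quotient.mk _ s(a, k • b) = q) ∧
      (q ∈ orbits G (Sym2.map Subtype.val '' (Γ.induce D).edgeSet) → k = 1) := by
  by_cases hqD : q ∈ orbits G (Sym2.map Subtype.val '' (Γ.induce D).edgeSet)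
  · obtain ⟨_, ⟨e, -, rfl⟩, rfl⟩ := hqD
    induction e with | _ a b
    exact ⟨1, ⟨a, a.2, b, b.2, by rw [one_smul]; rfl⟩, fun _ => rfl⟩
  · obtain ⟨e, he, rfl⟩ := hq
    induction e with | _ x y
    obtain ⟨g, a, ha, rfl⟩ := exists_smul_mem_of_orbits_eq hD (h.support_subset ⟨y, he⟩)
    obtain ⟨k, b, hb, rfl⟩ := exists_smul_mem_of_orbits_eq hD (h.support_subset ⟨_, he.symm⟩)
    refine ⟨g⁻¹ * k, ⟨a, ha, b, hb, mk_eq_mk_iff.2 ⟨g⁻¹, ?_⟩⟩, fun hq => absurd hq hqD⟩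
    rw [smul_sym2_mk, inv_smul_smul, mul_smul]

theorem IsInvariantConnected.exists_generators [IsCancelSMul G X]
    (h : IsInvariantConnected G Γ V) (hx₀ : x₀ ∈ V) (hV : (orbits G V).Finite)
    (hE : (orbits G Γ.edgeSet).Finite) :
    ∃ S : Finset G, Subgroup.closure (S : Set G) = ⊤ ∧
      S.card + (orbits G V).ncard ≤ (orbits G Γ.edgeSet).ncard + 1 := by
  classical
  obtain ⟨D, hDV, hxD, hconn, hinj, horb⟩ := h.exists_connected_transversal hx₀ hV
  have hDfin : D.Finite := (Set.finite_image_iff hinj).1 (horb.symm ▸ hV : (orbits G D).Finite)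
  let ED := orbits G (Sym2.map Subtype.val '' (Γ.induce D).edgeSet)
  have hED : ED ⊆ orbits G Γ.edgeSet := by
    refine Set.image_mono (Set.image_subset_iff.2 fun e he => ?_)
    induction e with | _ a b
    exact he
  choose! k hk hk_one using fun q (hq : q ∈ orbits G Γ.edgeSet) => h.exists_label horb hq
  let S : Finset G := (hE.sdiff (t := ED)).toFinset.image k
  refine ⟨S, h.eq_top_of_edges_mem_translates hDV hinj hxD fun e he => ?_, ?_⟩
  · obtain ⟨a, ha, b, hb, hab⟩ := hk _ (mk_mem_orbits he)
    obtain ⟨g, hg⟩ := mk_eq_mk_iff.1 hab.symm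
    refine ⟨g, _, ?_, a, ha, b, hb, hg⟩
    by_cases heD : Quotient.mk _ e ∈ ED
    · rw [hk_one _ (mk_mem_orbits he) heD]
      exact one_mem _
    · refine Subgroup.subset_closure (Finset.mem_image_of_mem k ?_)
      exact (Set.Finite.mem_toFinset _).2 ⟨mk_mem_orbits he, heD⟩
  · have hDcard : D.ncard ≤ ED.ncard + 1 :=
      ncard_le_ncard_orbits_induce_edgeSet_add_one hconn hDfin hinj
    have hScard : S.card ≤ (orbits G Γ.edgeSet \ ED).ncard :=
      Finset.card_image_le.trans (Set.ncard_eq_toFinset_card _ _).ge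
    have hdiff := Set.ncard_sdiff_add_ncard_of_subset hED hE
    have hVcard : (orbits G V).ncard = D.ncard := horb ▸ hinj.ncard_image
    omega

end Generators

/-! ### Cayley graphs of free groups -/

section Cayley

variable {G : Type*} [Group G]

theorem isAcyclic_of_exists_isPotential {X : Type*} {Γ : SimpleGraph X}
    (h : ∀ φ, ∃ f, IsPotential Γ φ f) : Γ.IsAcyclic := by
  classical
  refine isAcyclic_iff_forall_adj_isBridge.2 fun {v w} hvw => isBridge_iff.2 fun hreach => ?_
  obtain ⟨f, hf⟩ := h (Pi.single s(v, w) 1)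
  have hfw : f w = f v := by
    refine mem_of_reachable_of_closed (s := {x | f x = f v}) (fun a b hab ha => ?_) hreach rfl
    obtain ⟨hab, hne⟩ := deleteEdges_adj.1 hab
    have hsum := hf a b hab
    rw [Pi.single_eq_of_ne hne, ← CharTwo.sub_eq_add, sub_eq_zero] at hsum
    exact hsum.symm.trans ha
  have hsum := hf v w hvw
  rw [Pi.single_eq_same, hfw, CharTwo.add_self_eq_zero] at hsum
  exact zero_ne_one hsum

theorem exists_map_mul_of_eq [IsFreeGroup G] {A : Type*} [Group A]
    (φ : G → IsFreeGroup.Generators G → A) :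
    ∃ f : G → A, ∀ g x, f (g * IsFreeGroup.of x) = f g * φ g x := by
  -- The base group of the wreath product records the values of `f`.
  let Φ : G →* A ≀ᵣ G := IsFreeGroup.lift fun x => ⟨fun g => φ g⁻¹ x, IsFreeGroup.of x⟩
  have hΦ : RegularWreathProduct.rightHom.comp Φ = MonoidHom.id G :=
    IsFreeGroup.ext_hom fun x => congrArg RegularWreathProduct.right (IsFreeGroup.lift_of _ x)
  have hright (g : G) : (Φ g).right = g := DFunLike.congr_fun hΦ g
  have hleft (g : G) x : (Φ (IsFreeGroup.of x)).left g = φ g⁻¹ x :=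
    congrFun (congrArg RegularWreathProduct.left (IsFreeGroup.lift_of _ x)) g
  refine ⟨fun g => (Φ g).left 1, fun g x => ?_⟩
  beta_reduce
  rw [map_mul, RegularWreathProduct.mul_left, Pi.mul_apply, hright, mul_one, hleft, inv_inv]

variable (G) in
theorem isAcyclic_mulCayley_range_of [IsFreeGroup G] :
    (mulCayley (Set.range (IsFreeGroup.of (G := G)))).IsAcyclic := by
  refine isAcyclic_of_exists_isPotential fun φ => ?_
  obtain ⟨f, hf⟩ := exists_map_mul_of_eq (A := Multiplicative (ZMod 2))
    fun g x => .ofAdd (φ s(g, g * IsFreeGroup.of x))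
  have hf' (g : G) (x : IsFreeGroup.Generators G) : (f g).toAdd +
      (f (g * IsFreeGroup.of x)).toAdd = φ s(g, g * IsFreeGroup.of x) := by
    rw [hf, toAdd_mul, toAdd_ofAdd, ← add_assoc, CharTwo.add_self_eq_zero, zero_add]
  refine ⟨fun g => (f g).toAdd, fun a b hab => ?_⟩
  obtain ⟨-, -, ⟨x, rfl⟩, rfl | rfl⟩ := (mulCayley_adj' _ _ _).1 hab
  · exact hf' a x
  · rw [add_comm, Sym2.eq_swap]
    exact hf' b x

theorem mulCayley_smul_adj {S : Set G} (K : Subgroup G) (k : K) {a b : G}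
    (hab : (mulCayley S).Adj a b) : (mulCayley S).Adj (k • a) (k • b) :=
  mulCayley_adj_mul_iff_right.2 hab

theorem connected_mulCayley {S : Set G} (hS : Subgroup.closure S = ⊤) :
    (mulCayley S).Connected := by
  have reachable_one (g : G) : (mulCayley S).Reachable 1 g := by
    have h := reachable_smul_of_closure_eq_top (x₀ := (1 : G)) (Γ := mulCayley S)
      (fun g _ _ hab => mulCayley_adj_mul_iff_right.2 hab) hS (fun s hs => ?_) g
    · rwa [smul_eq_mul, mul_one] at h
    · rw [smul_eq_mul, mul_one]
      by_cases h1 : (1 : G) = s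
      · rw [h1]
      · exact ((mulCayley_adj' _ _ _).2 ⟨h1, s, hs, .inl (one_mul s)⟩).reachable
  exact ⟨fun v w => (reachable_one v).symm.trans (reachable_one w)⟩

variable (G) in
theorem closure_range_of [IsFreeGroup G] :
    Subgroup.closure (Set.range (IsFreeGroup.of (G := G))) = ⊤ := by
  have hrange : Set.range (IsFreeGroup.of (G := G)) =
      (IsFreeGroup.mulEquiv G).toMonoidHom '' Set.range FreeGroup.of := Set.range_comp _ _
  rw [hrange, ← MonoidHom.map_closure, FreeGroup.closure_range_of]
  exact Subgroup.map_top_of_surjective _ (IsFreeGroup.mulEquiv G).surjective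

variable (G) in
theorem isTree_mulCayley_range_of [IsFreeGroup G] :
    (mulCayley (Set.range (IsFreeGroup.of (G := G)))).IsTree :=
  ⟨connected_mulCayley (closure_range_of G), isAcyclic_mulCayley_range_of G⟩

theorem isInvariantConnected_mulCayley {S : Set G} (hS : Subgroup.closure S = ⊤)
    (K : Subgroup G) : IsInvariantConnected K (mulCayley S) Set.univ where
  smul_mem _ _ _ := Set.mem_univ _
  smul_adj k _ _ := mulCayley_smul_adj K k
  support_subset := Set.subset_univ _
  reachable _ _ := (connected_mulCayley hS).preconnected _ _

theorem natCard_orbitRel_quotient (K : Subgroup G) :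
    Nat.card (orbitRel.Quotient K G) = K.index :=
  Nat.card_congr (QuotientGroup.quotientRightRelEquivQuotientLeftRel K)

theorem orbits_mulCayley_edgeSet_subset (K : Subgroup G) (S : Set G) :
    orbits K (mulCayley S).edgeSet ⊆
      (fun p : orbitRel.Quotient K G × G => Quotient.mk _ s(p.1.out, p.1.out * p.2)) ''
        (Set.univ ×ˢ S) := by
  have mem_image (a : G) {s : G} (hs : s ∈ S) :
      (Quotient.mk _ s(a, a * s) : orbitRel.Quotient K (Sym2 G)) ∈
        (fun p : orbitRel.Quotient K G × G => Quotient.mk _ s(p.1.out, p.1.out * p.2)) ''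
          (Set.univ ×ˢ S) := by
    obtain ⟨k, hk⟩ := exists_smul_out_eq (G := K) a
    refine ⟨(Quotient.mk _ a, s), ⟨Set.mem_univ _, hs⟩, (mk_eq_mk_iff.2 ⟨k, ?_⟩).symm⟩
    rw [smul_sym2_mk, ← smul_mul_assoc, hk]
  rintro _ ⟨e, he, rfl⟩
  induction e with
  | h a b =>
    obtain ⟨-, s, hs, rfl | rfl⟩ := (mulCayley_adj' _ _ _).1 ((mem_edgeSet _).1 he)
    · exact mem_image a hs
    · rw [Sym2.eq_swap]
      exact mem_image b hs

theorem exists_schreier_generators {S : Finset G} (hS : Subgroup.closure (S : Set G) = ⊤)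
    (K : Subgroup G) [K.FiniteIndex] :
    ∃ S' : Finset K, Subgroup.closure (S' : Set K) = ⊤ ∧
      S'.card + K.index ≤ K.index * S.card + 1 := by
  have hcard := natCard_orbitRel_quotient K
  have : Finite (orbitRel.Quotient K G) :=
    Nat.finite_of_card_ne_zero (hcard ▸ Subgroup.FiniteIndex.index_ne_zero)
  have hfin := Set.finite_univ.prod S.finite_toSet (α := orbitRel.Quotient K G)
  have hsub := orbits_mulCayley_edgeSet_subset K (S : Set G)
  have hE : (orbits K (mulCayley (S : Set G)).edgeSet).ncard ≤ K.index * S.card :=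
    calc _ ≤ _ := Set.ncard_le_ncard hsub (hfin.image _)
      _ ≤ _ := Set.ncard_image_le hfin
      _ = K.index * S.card := by
        rw [Set.ncard_prod, Set.ncard_univ, hcard, Set.ncard_coe_finset]
  obtain ⟨S', hS', hcard'⟩ := (isInvariantConnected_mulCayley hS K).exists_generators
    (Set.mem_univ 1) (Set.toFinite _) ((hfin.image _).subset hsub)
  rw [orbits, Set.image_univ_of_surjective Quotient.mk_surjective, Set.ncard_univ, hcard] at hcard'
  exact ⟨S', hS', hcard'.trans (Nat.add_le_add_right hE 1)⟩

end Cayley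

/-! ### Left orders on free groups -/

section LeftOrder

variable {G : Type*} [Group G]

/-- `P` contains `a` or `a⁻¹` for every `a`; such a submonoid is the nonnegative cone of a
left-invariant total preorder on `G`. -/
def IsTotalCone (P : Submonoid G) : Prop :=
  ∀ a, a ∈ P ∨ a⁻¹ ∈ P

theorem IsTotalCone.sInf {c : Set (Submonoid G)} (hc : ∀ P ∈ c, IsTotalCone P)
    (hchain : IsChain (· ≤ ·) c) : IsTotalCone (sInf c) := by
  intro a
  by_contra! h
  simp only [Submonoid.mem_sInf, not_forall] at h
  obtain ⟨⟨P, hP, haP⟩, Q, hQ, haQ⟩ := h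
  rcases hchain.total hP hQ with hPQ | hQP
  · exact (hc P hP a).elim haP fun ha => haQ (hPQ ha)
  · exact (hc Q hQ a).elim (fun ha => haP (hQP ha)) haQ

variable (G) in
theorem exists_minimal_isTotalCone : ∃ P : Submonoid G, Minimal IsTotalCone P := by
  obtain ⟨P, -, hP⟩ := zorn_le_nonempty₀ (α := (Submonoid G)ᵒᵈ)
    {P | IsTotalCone (OrderDual.ofDual P)}
    (fun c hc hchain _ _ => ⟨OrderDual.toDual (sInf (OrderDual.toDual ⁻¹' c)),
      IsTotalCone.sInf (fun P hP => hc hP) hchain.symm, fun P hP => sInf_le (α := Submonoid G) hP⟩)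
    (OrderDual.toDual ⊤) fun a => .inl (Submonoid.mem_top a)
  exact ⟨OrderDual.ofDual P, hP.prop, fun _ hQ hle => hP.le_of_ge hQ hle⟩

/-- The elements of the cone `P` on whose unit group the homomorphism `θ` is nonnegative: the
lexicographic refinement of the preorder of `P` by `θ`. -/
def refinedCone (P : Submonoid G) (θ : P.mulSupport →* Multiplicative ℤ) : Submonoid G where
  carrier := {g | g ∈ P ∧ ∀ h : g ∈ P.mulSupport, 1 ≤ θ ⟨g, h⟩}
  one_mem' := ⟨P.one_mem, fun _ => (map_one θ).ge⟩
  mul_mem' := by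
    rintro a b ⟨ha, hθa⟩ ⟨hb, hθb⟩
    refine ⟨P.mul_mem ha hb, fun hab => ?_⟩
    have hab' := (Submonoid.mem_mulSupport.1 hab).2
    have ha' : a ∈ P.mulSupport :=
      Submonoid.mem_mulSupport.2 ⟨ha, by simpa using P.mul_mem hb hab'⟩
    have hb' : b ∈ P.mulSupport :=
      Submonoid.mem_mulSupport.2 ⟨hb, by simpa using P.mul_mem hab' ha⟩
    change 1 ≤ θ (⟨a, ha'⟩ * ⟨b, hb'⟩)
    rw [map_mul]
    exact one_le_mul (hθa ha') (hθb hb')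

theorem IsTotalCone.refinedCone {P : Submonoid G} (hP : IsTotalCone P)
    (θ : P.mulSupport →* Multiplicative ℤ) : IsTotalCone (refinedCone P θ) := by
  intro a
  by_cases ha : a ∈ P.mulSupport
  · have hmem := Submonoid.mem_mulSupport.1 ha
    rcases le_total 1 (θ ⟨a, ha⟩) with hθ | hθ
    · exact .inl ⟨hmem.1, fun _ => hθ⟩
    · refine .inr ⟨hmem.2, fun ha' => ?_⟩
      change 1 ≤ θ (⟨a, ha⟩⁻¹)
      rw [map_inv]
      exact Left.one_le_inv_iff.2 hθ
  · exact (hP a).imp (fun h => ⟨h, fun h' => absurd h' ha⟩)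
      fun h => ⟨h, fun h' => absurd (inv_mem_iff.1 h') ha⟩

theorem mulSupport_eq_bot_of_minimal
    (hG : ∀ H : Subgroup G, H ≠ ⊥ → ∃ θ : H →* Multiplicative ℤ, θ ≠ 1) {P : Submonoid G}
    (hP : Minimal IsTotalCone P) : P.mulSupport = ⊥ := by
  by_contra hne
  obtain ⟨θ, hθ⟩ := hG _ hne
  have hle : P ≤ refinedCone P θ := hP.le_of_le (hP.prop.refinedCone θ) fun _ h => h.1
  have one_le (k : P.mulSupport) : 1 ≤ θ k := (hle (Submonoid.mem_mulSupport.1 k.2).1).2 k.2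
  refine hθ (MonoidHom.ext fun k => le_antisymm ?_ (one_le k))
  have hinv := one_le k⁻¹
  rwa [map_inv, Left.one_le_inv_iff] at hinv

theorem exists_hom_ne_one [IsFreeGroup G] [Nontrivial G] : ∃ θ : G →* Multiplicative ℤ, θ ≠ 1 := by
  have : Nonempty (IsFreeGroup.Generators G) := by
    by_contra! h
    exact not_subsingleton G (IsFreeGroup.toFreeGroup G).toEquiv.subsingleton
  obtain ⟨x⟩ := this
  refine ⟨IsFreeGroup.lift fun _ => .ofAdd 1, fun h => ?_⟩
  have hx := DFunLike.congr_fun h (IsFreeGroup.of x)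
  rw [IsFreeGroup.lift_of, MonoidHom.one_apply] at hx
  exact one_ne_zero (Multiplicative.ofAdd.injective hx)

variable (G) in
theorem exists_leftInvariant_linearOrder [IsFreeGroup G] :
    ∃ _ : LinearOrder G, ∀ a b c : G, b ≤ c → a * b ≤ a * c := by
  classical
  obtain ⟨P, hP⟩ := exists_minimal_isTotalCone G
  have hbot : P.mulSupport = ⊥ := mulSupport_eq_bot_of_minimal (fun H hH => by
    have := subgroupIsFreeOfIsFree H
    have := H.nontrivial_iff_ne_bot.2 hH
    exact exists_hom_ne_one) hP
  let order : LinearOrder G :=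
    { le := fun a b => a⁻¹ * b ∈ P
      le_refl := fun a => by simp only [inv_mul_cancel, one_mem]
      le_trans := fun a b c hab hbc => by simpa [mul_assoc] using P.mul_mem hab hbc
      le_antisymm := fun a b hab hba => by
        have : a⁻¹ * b ∈ P.mulSupport :=
          Submonoid.mem_mulSupport.2 ⟨hab, by simpa using hba⟩
        rw [hbot, Subgroup.mem_bot] at this
        exact inv_mul_eq_one.1 this
      le_total := fun a b => by simpa using hP.prop (a⁻¹ * b)
      toDecidableLE := fun _ _ => Classical.dec _ }
  refine ⟨order, fun a b c (h : b⁻¹ * c ∈ P) => ?_⟩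
  change (a * b)⁻¹ * (a * c) ∈ P
  rwa [mul_inv_rev, mul_assoc, inv_mul_cancel_left]

end LeftOrder

section TreeAction

variable {G X : Type*} [Group G] [MulAction G X] [LinearOrder X]
  [CovariantClass G X (· • ·) (· ≤ ·)] [IsCancelSMul G X] {T : SimpleGraph X}

instance (H : Subgroup G) : CovariantClass H X (· • ·) (· ≤ ·) :=
  ⟨fun h _ _ hab => smul_mono_right (h : G) hab⟩

theorem exists_hull_encard_essential_le [Nontrivial G] (hT : T.IsTree)
    (hTG : ∀ (g : G) {a b}, T.Adj a b → T.Adj (g • a) (g • b)) {S : Finset G}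
    (hS : Subgroup.closure (S : Set G) = ⊤) (x₀ : X) :
    ∃ (Γ : SimpleGraph X) (V : Set X), Γ ≤ T ∧ x₀ ∈ V ∧ IsInvariantConnected G Γ V ∧
      (orbits G V).Finite ∧ (orbits G {e | IsEssential Γ e}).encard ≤ (S.card - 1 : ℕ) := by
  obtain ⟨Γ, V, hΓT, hx₀, h, hV, hE⟩ := exists_cofinite_hull hT.1 hTG S.finite_toSet hS x₀
  refine ⟨Γ, V, hΓT, hx₀, h, hV, ?_⟩
  have hess : (orbits G {e | IsEssential Γ e}).Finite :=
    hE.subset (Set.image_mono fun e he => he.1)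
  have hlower := encard_orbits_add_essential_le h hV hE
  have hupper := ncard_orbits_edgeSet_add_one_le (hT.2.anti hΓT) h hx₀ hS hV hE
  rw [← hV.cast_ncard_eq, ← hess.cast_ncard_eq, ← hE.cast_ncard_eq] at hlower
  rw [← hess.cast_ncard_eq]
  norm_cast at hlower ⊢
  omega

theorem exists_generators_inf (hT : T.IsTree)
    (hTG : ∀ (g : G) {a b}, T.Adj a b → T.Adj (g • a) (g • b)) [Nonempty X] {H K : Subgroup G}
    [Nontrivial H] [Nontrivial K] {S : Finset H} {S' : Finset K}
    (hS : Subgroup.closure (S : Set H) = ⊤) (hS' : Subgroup.closure (S' : Set K) = ⊤) :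
    ∃ R : Finset ↥(H ⊓ K), Subgroup.closure (R : Set ↥(H ⊓ K)) = ⊤ ∧
      R.card ≤ (S.card - 1) * (S'.card - 1) + 1 := by
  obtain ⟨x₀⟩ := ‹Nonempty X›
  obtain ⟨Γ, V, hΓT, hx₀, h, hV, hess⟩ :=
    exists_hull_encard_essential_le (G := H) hT (fun g _ _ => hTG g) hS x₀
  obtain ⟨Γ', V', hΓT', hx₀', h', hV', hess'⟩ :=
    exists_hull_encard_essential_le (G := K) hT (fun g _ _ => hTG g) hS' x₀
  have hinf := h.inf hT.2 hΓT hΓT' h'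
  have hVinf : (orbits ↥(H ⊓ K) (V ∩ V')).Finite := Set.finite_of_encard_le_coe
    ((encard_orbits_inf_le H K V V').trans_eq (by
      rw [← hV.cast_ncard_eq, ← hV'.cast_ncard_eq, ← Nat.cast_mul]))
  have hess_inf : (orbits ↥(H ⊓ K) {e | IsEssential (Γ ⊓ Γ') e}).encard ≤
      ((S.card - 1) * (S'.card - 1) : ℕ) :=
    calc _ ≤ (orbits ↥(H ⊓ K) ({e | IsEssential Γ e} ∩ {e | IsEssential Γ' e})).encard :=
          Set.encard_le_encard (Set.image_mono fun e he =>
            ⟨he.mono inf_le_left, he.mono inf_le_right⟩)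
      _ ≤ _ := encard_orbits_inf_le H K _ _
      _ ≤ _ := mul_le_mul' hess hess'
      _ = _ := (Nat.cast_mul _ _).symm
  have hedges : (orbits ↥(H ⊓ K) (Γ ⊓ Γ').edgeSet).encard ≤
      ((orbits ↥(H ⊓ K) (V ∩ V')).ncard + (S.card - 1) * (S'.card - 1) : ℕ) :=
    calc _ ≤ _ := encard_orbits_edgeSet_le (hT.2.anti (inf_le_left.trans hΓT)) hinf
      _ ≤ _ := add_le_add_right hess_inf _
      _ = _ := by rw [Nat.cast_add, hVinf.cast_ncard_eq]
  have hE := Set.finite_of_encard_le_coe hedges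
  obtain ⟨R, hR, hcard⟩ := hinf.exists_generators ⟨hx₀, hx₀'⟩ hVinf hE
  rw [← hE.cast_ncard_eq, Nat.cast_le] at hedges
  exact ⟨R, hR, by omega⟩

end TreeAction

/-! ### Numbers of generators and finite index -/

section GenLE

variable {G G' : Type*} [Group G] [Group G'] {H K : Subgroup G} {n : ℕ}

theorem genLE_map_iff {f : G →* G'} (hf : Function.Injective f) :
    (H.map f).GenLE n ↔ H.GenLE n := by
  classical
  constructor
  · rintro ⟨S, hS, hn⟩
    have hrange : (S : Set G') ⊆ Set.range f := fun x hx => by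
      obtain ⟨y, -, hy⟩ : x ∈ H.map f := hS ▸ Subgroup.subset_closure hx
      exact ⟨y, hy⟩
    have himage := Set.image_preimage_eq_of_subset hrange
    refine ⟨S.preimage f hf.injOn, Subgroup.map_injective hf ?_, ?_⟩
    · rw [MonoidHom.map_closure, Finset.coe_preimage, himage, hS]
    · rwa [← Set.ncard_coe_finset, Finset.coe_preimage, ← Set.ncard_image_of_injective _ hf,
        himage, Set.ncard_coe_finset]
  · rintro ⟨S, rfl, hn⟩
    refine ⟨S.image f, ?_, Finset.card_image_le.trans hn⟩
    rw [MonoidHom.map_closure, Finset.coe_image]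

theorem genLE_top_iff : (⊤ : Subgroup H).GenLE n ↔ H.GenLE n := by
  rw [← genLE_map_iff H.subtype_injective, ← MonoidHom.range_eq_map, H.range_subtype]

theorem genLE_subgroupOf_iff : (H.subgroupOf K).GenLE n ↔ (H ⊓ K).GenLE n := by
  rw [← genLE_map_iff K.subtype_injective, Subgroup.subgroupOf_map_subtype]

theorem genLE_of_eq_bot (hH : H = ⊥) : H.GenLE n :=
  ⟨∅, by rw [Finset.coe_empty, Subgroup.closure_empty, hH], Nat.zero_le n⟩

theorem index_subgroupOf_le (F H : Subgroup G) [F.FiniteIndex] :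
    (F.subgroupOf H).index ≤ F.index := by
  rw [← Subgroup.relIndex, ← F.relIndex_top_right]
  exact Subgroup.relIndex_le_of_le_right le_top
    (F.relIndex_top_right ▸ Subgroup.FiniteIndex.index_ne_zero)

theorem genLE_inf_of_finiteIndex (F : Subgroup G) [F.FiniteIndex] (hn : 1 ≤ n)
    (hH : H.GenLE n) : (H ⊓ F).GenLE (F.index * (n - 1) + 1) := by
  obtain ⟨S, hS, hSn⟩ := genLE_top_iff.2 hH
  obtain ⟨S', hS', hcard⟩ := exists_schreier_generators hS (F.subgroupOf H)
  rw [inf_comm, ← genLE_subgroupOf_iff, ← genLE_top_iff]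
  refine ⟨S', hS', ?_⟩
  have hindex := index_subgroupOf_le F H
  obtain ⟨k, rfl⟩ := Nat.exists_eq_add_of_le' hn
  have hmul : (F.subgroupOf H).index * S.card ≤ (F.subgroupOf H).index * (k + 1) :=
    Nat.mul_le_mul_left _ hSn
  have hk : (F.subgroupOf H).index * k ≤ F.index * k := Nat.mul_le_mul_right k hindex
  rw [mul_add_one] at hmul
  rw [Nat.add_sub_cancel]
  omega

theorem genLE_top_of_finiteIndex (F : Subgroup G) [F.FiniteIndex] (hF : F.GenLE n) :
    (⊤ : Subgroup G).GenLE (n + (F.index - 1)) := by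
  classical
  obtain ⟨S, hS, hn⟩ := hF
  obtain ⟨R, hR, h1⟩ := F.exists_isComplement_left 1
  have hRfin : R.Finite := hR.finite_left
  refine ⟨S ∪ hRfin.toFinset.erase 1, ?_, (Finset.card_union_le _ _).trans ?_⟩
  · rw [Finset.coe_union, Subgroup.closure_union, hS, Finset.coe_erase, hRfin.coe_toFinset,
      Subgroup.closure_sdiff_one, ← Subgroup.coe_eq_univ, Set.eq_univ_iff_forall]
    intro g
    obtain ⟨⟨r, f⟩, hg⟩ := hR.2 g
    rw [← hg]
    exact mul_mem (Subgroup.mem_sup_right (Subgroup.subset_closure r.2))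
      (Subgroup.mem_sup_left f.2)
  · rw [Finset.card_erase_of_mem (hRfin.mem_toFinset.2 h1), ← Set.ncard_eq_toFinset_card R hRfin,
      hR.ncard_left]
    exact Nat.add_le_add_right hn _

theorem genLE_of_inf_finiteIndex (F : Subgroup G) [F.FiniteIndex] (h : (H ⊓ F).GenLE n) :
    H.GenLE (n + (F.index - 1)) := by
  rw [inf_comm, ← genLE_subgroupOf_iff] at h
  obtain ⟨S, hS, hcard⟩ := genLE_top_of_finiteIndex _ h
  exact genLE_top_iff.1 ⟨S, hS, hcard.trans
    (Nat.add_le_add_left (Nat.sub_le_sub_right (index_subgroupOf_le F H) 1) n)⟩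

end GenLE

theorem genLE_inf_of_isFreeGroup {G : Type*} [Group G] [IsFreeGroup G] {H K : Subgroup G}
    {n k : ℕ} (hH : H.GenLE n) (hK : K.GenLE k) :
    (H ⊓ K).GenLE ((n - 1) * (k - 1) + 1) := by
  obtain ⟨_, hsmul⟩ := exists_leftInvariant_linearOrder G
  have : CovariantClass G G (· • ·) (· ≤ ·) := ⟨hsmul⟩
  rcases H.bot_or_nontrivial with rfl | hH_nontrivial
  · exact genLE_of_eq_bot (bot_inf_eq _)
  rcases K.bot_or_nontrivial with rfl | hK_nontrivial
  · exact genLE_of_eq_bot (inf_bot_eq _)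
  obtain ⟨S, hS, hSn⟩ := genLE_top_iff.2 hH
  obtain ⟨S', hS', hS'k⟩ := genLE_top_iff.2 hK
  obtain ⟨R, hR, hcard⟩ := exists_generators_inf (isTree_mulCayley_range_of G)
    (fun _ _ _ => mulCayley_adj_mul_iff_right.2) hS hS'
  refine genLE_top_iff.1 ⟨R, hR, hcard.trans (Nat.add_le_add_right ?_ 1)⟩
  exact Nat.mul_le_mul (Nat.sub_le_sub_right hSn 1) (Nat.sub_le_sub_right hS'k 1)

end HannaNeumann

/-- if `G` has a free subgroup `F` of finite index `m`, `n₁, n₂ ≥ 1`, and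
`H₁, H₂ ≤ G` are generated by at most `n₁` and `n₂` elements respectively, then
`H₁ ⊓ H₂` is generated by at most `m²(n₁−1)(n₂−1) + m` elements.
In particular, every virtually free group is strongly Howson. -/
theorem inter_genLE_of_virtually_free {G : Type*} [Group G] (F : Subgroup G)
    [IsFreeGroup ↥F] (m : ℕ) (hm : 0 < m) (hindex : F.index = m)
    (n₁ n₂ : ℕ) (hn₁ : 1 ≤ n₁) (hn₂ : 1 ≤ n₂)
    (H₁ H₂ : Subgroup G) (hH₁ : H₁.GenLE n₁) (hH₂ : H₂.GenLE n₂) :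
    (H₁ ⊓ H₂).GenLE (m ^ 2 * (n₁ - 1) * (n₂ - 1) + m) := by
  have : F.FiniteIndex := ⟨hindex ▸ hm.ne'⟩
  have hF₁ : (H₁.subgroupOf F).GenLE (m * (n₁ - 1) + 1) :=
    HannaNeumann.genLE_subgroupOf_iff.2 (hindex ▸ HannaNeumann.genLE_inf_of_finiteIndex F hn₁ hH₁)
  have hF₂ : (H₂.subgroupOf F).GenLE (m * (n₂ - 1) + 1) :=
    HannaNeumann.genLE_subgroupOf_iff.2 (hindex ▸ HannaNeumann.genLE_inf_of_finiteIndex F hn₂ hH₂)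
  have hinf : ((H₁ ⊓ H₂) ⊓ F).GenLE (m * (n₁ - 1) * (m * (n₂ - 1)) + 1) :=
    HannaNeumann.genLE_subgroupOf_iff.1 (HannaNeumann.genLE_inf_of_isFreeGroup hF₁ hF₂)
  convert HannaNeumann.genLE_of_inf_finiteIndex F hinf using 1
  rw [hindex, add_assoc, Nat.add_sub_cancel' hm]
  ring
end

section
/- Let G be a group with a subgroup F of finite index such that F is a Takahasi group, i.e., for every M ∈ ℕ, every ascending chain K_1 ≤ K_2 ≤ K_3 ≤ ... of subgroups of F, each generated by at most M elements, is eventually constant. Then G is a Takahasi group: for every M ∈ ℕ, every ascending chain H_1 ≤ H_2 ≤ H_3 ≤ ... of subgroups of G, each generated by at most M elements, is eventually constant. -/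
/-- A group `G` is a Takahasi group if for every `M : ℕ`, every ascending chain of
subgroups of `G`, each generated by at most `M` elements, is eventually constant. -/
def IsTakahasiGroup (G : Type*) [Group G] : Prop :=
  ∀ M : ℕ, ∀ H : ℕ → Subgroup G, (∀ i, H i ≤ H (i + 1)) →
    (∀ i, ∃ S : Finset G, Subgroup.closure (S : Set G) = H i ∧ S.card ≤ M) →
    ∃ p, ∀ i, p ≤ i → H i = H p

/-!
Intersect the chain `H i` with the finite-index subgroup `F`. Schreier's lemma bounds the ranks of
the traces `H i ⊓ F` by `F.index * M`, so the traces stabilize. The indices `[H i : H i ⊓ F]`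
are bounded by `F.index`, so one of them is maximal. For `n ≤ i` past both points,
`[H i : H n] = [H i : H i ⊓ F] / [H n : H n ⊓ F] = 1`.
-/

section Generators

variable {G : Type*} [Group G]

theorem exists_finset_closure_eq_card_le_iff {H : Subgroup G} {M : ℕ} :
    (∃ S : Finset G, Subgroup.closure (S : Set G) = H ∧ S.card ≤ M) ↔
      ∃ _ : Group.FG H, Group.rank H ≤ M := by
  classical
  constructor
  · rintro ⟨S, rfl, hS⟩
    exact ⟨inferInstance, (Subgroup.rank_closure_finset_le_card S).trans hS⟩
  · rintro ⟨_, hM⟩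
    obtain ⟨T, hT_card, hT⟩ := Group.rank_spec H
    refine ⟨T.image H.subtype, ?_, Finset.card_image_le.trans (hT_card.trans_le hM)⟩
    rw [Finset.coe_image, ← MonoidHom.map_closure, hT, ← MonoidHom.range_eq_map,
      Subgroup.range_subtype]

/-- The tautological isomorphism between the two copies of `H ⊓ K`, one as a subgroup of `K` and
the other as a subgroup of `H`. Schreier's lemma bounds the rank of the latter, and this moves the
bound to the former. -/
def subgroupOfSwap (H K : Subgroup G) : H.subgroupOf K ≃* K.subgroupOf H where
  toFun x := ⟨⟨x, x.2⟩, x.1.2⟩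
  invFun x := ⟨⟨x, x.2⟩, x.1.2⟩
  left_inv _ := rfl
  right_inv _ := rfl
  map_mul' _ _ := rfl

variable (F H : Subgroup G) [Group.FG H] [F.IsFiniteRelIndex H]

instance fg_subgroupOf : Group.FG (H.subgroupOf F) :=
  Group.fg_of_surjective (f := (subgroupOfSwap F H).toMonoidHom) (subgroupOfSwap F H).surjective

theorem rank_subgroupOf_le_relIndex_mul_rank :
    Group.rank (H.subgroupOf F) ≤ F.relIndex H * Group.rank H :=
  (Group.rank_congr (subgroupOfSwap H F)).trans_le (F.subgroupOf H).rank_le_index_mul_rank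

end Generators

section Index

variable {G : Type*} [Group G] {F : Subgroup G}

theorem relIndex_le_index [F.FiniteIndex] (H : Subgroup G) : F.relIndex H ≤ F.index := by
  rw [← F.relIndex_top_right]
  exact Subgroup.relIndex_le_of_le_right le_top (F.relIndex_top_right ▸ F.index_ne_zero_of_finite)

theorem exists_forall_relIndex_le [F.FiniteIndex] {ι : Type*} [Nonempty ι] (H : ι → Subgroup G) :
    ∃ q, ∀ i, F.relIndex (H i) ≤ F.relIndex (H q) := by
  have bounded : BddAbove (Set.range fun i => F.relIndex (H i)) :=
    ⟨F.index, Set.forall_mem_range.2 fun i => relIndex_le_index (H i)⟩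
  obtain ⟨q, hq⟩ := Nat.sSup_mem (Set.range_nonempty _) bounded
  exact ⟨q, fun i => (le_csSup bounded ⟨i, rfl⟩).trans_eq hq.symm⟩

theorem relIndex_mul_relIndex_of_inf_eq {H K : Subgroup G} (hHK : H ≤ K)
    (hF : F ⊓ H = F ⊓ K) : F.relIndex H * H.relIndex K = F.relIndex K :=
  calc
    F.relIndex H * H.relIndex K = (F ⊓ H).relIndex H * H.relIndex K := by
      rw [Subgroup.inf_relIndex_right]
    _ = (F ⊓ H).relIndex K := Subgroup.relIndex_mul_relIndex _ _ _ inf_le_right hHK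
    _ = F.relIndex K := by rw [hF, Subgroup.inf_relIndex_right]

theorem eq_of_inf_eq_of_relIndex_le {H K : Subgroup G} [F.IsFiniteRelIndex K] (hHK : H ≤ K)
    (hF : F ⊓ H = F ⊓ K) (hindex : F.relIndex K ≤ F.relIndex H) : H = K := by
  have hmul : F.relIndex H * H.relIndex K = F.relIndex K := relIndex_mul_relIndex_of_inf_eq hHK hF
  have hK : F.relIndex K ≠ 0 := F.relIndex_ne_zero
  have hH : F.relIndex H = F.relIndex K :=
    (Subgroup.relIndex_le_of_le_right hHK hK).antisymm hindex
  rw [hH, mul_eq_left₀ hK] at hmul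
  exact hHK.antisymm (Subgroup.relIndex_eq_one.1 hmul)

theorem exists_forall_eq_of_subgroupOf_eq [F.FiniteIndex] {ι : Type*} [SemilatticeSup ι]
    {H : ι → Subgroup G} (hH : Monotone H) {p : ι}
    (hp : ∀ i, p ≤ i → (H i).subgroupOf F = (H p).subgroupOf F) :
    ∃ n, ∀ i, n ≤ i → H i = H n := by
  have : Nonempty ι := ⟨p⟩
  have (i : ι) : F.IsFiniteRelIndex (H i) := Subgroup.isFiniteRelIndex_of_finiteIndex
  obtain ⟨q, hq⟩ := exists_forall_relIndex_le (F := F) H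
  refine ⟨p ⊔ q, fun i hi => (eq_of_inf_eq_of_relIndex_le (F := F) (hH hi) ?_ ?_).symm⟩
  · have htrace := (hp (p ⊔ q) le_sup_left).trans (hp i (le_sup_left.trans hi)).symm
    simpa only [inf_comm] using Subgroup.subgroupOf_inj.1 htrace
  · exact (hq i).trans (Subgroup.relIndex_le_of_le_right (hH le_sup_right) F.relIndex_ne_zero)

end Index

/-- a finite extension of a Takahasi group is a Takahasi group. -/
theorem isTakahasiGroup_of_finite_extension {G : Type*} [Group G] (F : Subgroup G)
    [F.FiniteIndex] (hF : IsTakahasiGroup ↥F) : IsTakahasiGroup G := by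
  intro M H hH hgen
  have (i : ℕ) : F.IsFiniteRelIndex (H i) := Subgroup.isFiniteRelIndex_of_finiteIndex
  have trace_generators (i : ℕ) : ∃ T : Finset F,
      Subgroup.closure (T : Set F) = (H i).subgroupOf F ∧ T.card ≤ F.index * M := by
    obtain ⟨_, hrank⟩ := exists_finset_closure_eq_card_le_iff.1 (hgen i)
    exact exists_finset_closure_eq_card_le_iff.2 ⟨inferInstance,
      (rank_subgroupOf_le_relIndex_mul_rank F (H i)).trans
        (Nat.mul_le_mul (relIndex_le_index (H i)) hrank)⟩
  obtain ⟨p, hp⟩ := hF (F.index * M) (fun i => (H i).subgroupOf F)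
    (fun i => Subgroup.comap_mono (hH i)) trace_generators
  exact exists_forall_eq_of_subgroupOf_eq (monotone_nat_of_le_succ hH) hp
end

section
/- Let N = S_1 ∗ ... ∗ S_t be the free product of finitely many groups S_1, ..., S_t, where each S_i admits a subnormal series with all quotients infinite cyclic (i.e., each S_i is strongly polycyclic). Then N is a Takahasi group: for every natural number M, every ascending chain H_1 ≤ H_2 ≤ H_3 ≤ ... of subgroups of N, each generated by at most M elements, is eventually constant. -/
/-- `c` is a subnormal series `G = c 0 ⊳ c 1 ⊳ … ⊳ c n = {1}` with all quotients
infinite cyclic, i.e. a witness that `G` is strongly polycyclic. -/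
def IsInfiniteCyclicSeries {G : Type*} [Group G] (n : ℕ) (c : Fin (n + 1) → Subgroup G) :
    Prop :=
  c 0 = ⊤ ∧ c (Fin.last n) = ⊥ ∧
    ∀ i : Fin n, c i.succ ≤ c i.castSucc ∧
      ∃ _h : ((c i.succ).subgroupOf (c i.castSucc)).Normal,
        IsCyclic (↥(c i.castSucc) ⧸ (c i.succ).subgroupOf (c i.castSucc)) ∧
          Infinite (↥(c i.castSucc) ⧸ (c i.succ).subgroupOf (c i.castSucc))

/-!
Let `U` be the union of an ascending chain of subgroups of rank at most `M`. A homomorphism `U → ℚ`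
is determined by its restrictions to the subgroups of the chain, so `H¹(U; ℚ)` has dimension at
most `M`. By Kurosh's theorem `U` is a free product of infinite cyclic groups and of groups that
embed in the given factors. Strongly polycyclic groups are Noetherian and locally indicable, so all
these free factors are finitely generated and each nontrivial one contributes to `H¹(U; ℚ)`. Hence
there are only finitely many of them, `U` is finitely generated, and the chain reaches `U`.

Kurosh's theorem follows from the observation that a cocycle for an action of a free product can be
prescribed independently on each factor. A cocycle restricts to a homomorphism on the stabilizer
of a point, which yields the universal property of a free product for this stabilizer.
-/

universe u v w

section PolycyclicGroups

variable {G Q : Type*} [Group G] [Group Q]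

theorem fg_of_fg_ker_of_fg_range (f : G →* Q) [Group.FG f.ker] [Group.FG f.range] :
    Group.FG G := by
  classical
  obtain ⟨S, hS⟩ := (Group.fg_iff_subgroup_fg f.range).mp ‹_›
  have hS_range : (S : Set Q) ⊆ f '' Set.univ := by
    rw [Set.image_univ, ← MonoidHom.coe_range, ← hS]
    exact Subgroup.subset_closure
  obtain ⟨T, -, hT⟩ := Finset.subset_set_image_iff.mp hS_range
  have hmap : (Subgroup.closure (T : Set G)).map f = (⊤ : Subgroup G).map f := by
    rw [MonoidHom.map_closure, ← Finset.coe_image, hT, hS, MonoidHom.range_eq_map]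
  rw [Subgroup.map_eq_map_iff, top_sup_eq] at hmap
  rw [Group.fg_def, ← hmap]
  exact Subgroup.FG.sup ⟨T, rfl⟩ ((Group.fg_iff_subgroup_fg _).mp ‹_›)

/-- A Noetherian (or slender) group: every subgroup is finitely generated. -/
def IsNoetherianGroup (G : Type*) [Group G] : Prop :=
  ∀ K : Subgroup G, Group.FG K

namespace IsNoetherianGroup

theorem of_injective (hQ : IsNoetherianGroup Q) (f : G →* Q) (hf : Function.Injective f) :
    IsNoetherianGroup G := fun K =>
  have := hQ (K.map f)
  Group.fg_of_surjective (f := (K.equivMapOfInjective f hf).symm.toMonoidHom)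
    (K.equivMapOfInjective f hf).symm.surjective

theorem fg (hG : IsNoetherianGroup G) : Group.FG G :=
  Group.fg_def.mpr ((Group.fg_iff_subgroup_fg ⊤).mp (hG ⊤))

theorem of_subsingleton [Subsingleton G] : IsNoetherianGroup G := fun _ => inferInstance

theorem of_isCyclic [IsCyclic G] : IsNoetherianGroup G := fun K => by
  obtain ⟨g, hg⟩ := IsCyclic.exists_generator (α := K)
  exact Group.fg_iff.mpr
    ⟨{g}, by rwa [← Subgroup.zpowers_eq_closure, Subgroup.eq_top_iff'], Set.finite_singleton g⟩

theorem of_ker (f : G →* Q) (hker : IsNoetherianGroup f.ker) (hQ : IsNoetherianGroup Q) :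
    IsNoetherianGroup G := fun K => by
  let f' : K →* Q := f.comp K.subtype
  let ι : f'.ker →* f.ker := (K.subtype.comp f'.ker.subtype).codRestrict f.ker fun x => x.2
  have hι : Function.Injective ι := fun x y hxy =>
    Subtype.ext <| Subtype.ext <| congrArg (fun z : f.ker => (z : G)) hxy
  have : Group.FG f'.ker := (hker.of_injective ι hι).fg
  have : Group.FG f'.range := hQ f'.range
  exact fg_of_fg_ker_of_fg_range f'

end IsNoetherianGroup

/-- A locally indicable group: every nontrivial finitely generated subgroup has a nontrivial
homomorphism to `ℤ`. -/
def IsLocallyIndicable (G : Type*) [Group G] : Prop :=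
  ∀ K : Subgroup G, Group.FG K → Nontrivial K → ∃ χ : K →* Multiplicative ℤ, χ ≠ 1

namespace IsLocallyIndicable

theorem of_injective (hQ : IsLocallyIndicable Q) (f : G →* Q) (hf : Function.Injective f) :
    IsLocallyIndicable G := fun K _ _ => by
  let e : K ≃* K.map f := K.equivMapOfInjective f hf
  obtain ⟨χ, hχ⟩ := hQ (K.map f) (Group.fg_of_surjective (f := e.toMonoidHom) e.surjective)
    e.injective.nontrivial
  exact ⟨χ.comp e.toMonoidHom, fun h => hχ <| (MonoidHom.cancel_right e.surjective).mp h⟩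

theorem exists_hom_ne_one (hG : IsLocallyIndicable G) [Group.FG G] [Nontrivial G] :
    ∃ χ : G →* Multiplicative ℤ, χ ≠ 1 := by
  let e : G ≃* (⊤ : Subgroup G) := Subgroup.topEquiv.symm
  obtain ⟨χ, hχ⟩ := hG ⊤ (Group.fg_of_surjective (f := e.toMonoidHom) e.surjective)
    e.injective.nontrivial
  exact ⟨χ.comp e.toMonoidHom, fun h => hχ <| (MonoidHom.cancel_right e.surjective).mp h⟩

theorem of_subsingleton [Subsingleton G] : IsLocallyIndicable G := fun K _ hK =>
  (not_nontrivial K hK).elim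

theorem of_isCyclic_of_infinite [IsCyclic G] [Infinite G] : IsLocallyIndicable G := fun K _ _ => by
  obtain ⟨k, hk⟩ := exists_ne (1 : K)
  let e : G ≃* Multiplicative ℤ := intCyclicMulEquiv.symm
  refine ⟨e.toMonoidHom.comp K.subtype, fun h => hk ?_⟩
  exact (e.injective.comp K.subtype_injective) ((DFunLike.congr_fun h k).trans (map_one e).symm)

theorem of_ker (f : G →* Q) (hker : IsLocallyIndicable f.ker) (hQ : IsLocallyIndicable Q) :
    IsLocallyIndicable G := fun K _ _ => by
  let f' : K →* Q := f.comp K.subtype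
  by_cases hf' : f' = 1
  · let ι : K →* f.ker := K.subtype.codRestrict f.ker (DFunLike.congr_fun hf')
    have hι : Function.Injective ι := fun x y hxy =>
      Subtype.ext <| congrArg (fun z : f.ker => (z : G)) hxy
    exact (hker.of_injective ι hι).exists_hom_ne_one
  · have : Nontrivial f'.range := by
      rwa [Subgroup.nontrivial_iff_ne_bot, Ne, MonoidHom.range_eq_bot_iff]
    obtain ⟨χ, hχ⟩ := hQ f'.range inferInstance this
    exact ⟨χ.comp f'.rangeRestrict, fun h =>
      hχ <| (MonoidHom.cancel_right f'.rangeRestrict_surjective).mp h⟩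

end IsLocallyIndicable

namespace IsInfiniteCyclicSeries

variable {G : Type u} [Group G] {n : ℕ} {c : Fin (n + 1) → Subgroup G}

theorem induction {P : ∀ (K : Type u) [Group K], Prop}
    (congr : ∀ {K L : Type u} [Group K] [Group L], (K ≃* L) → P K → P L)
    (of_subsingleton : ∀ (K : Type u) [Group K] [Subsingleton K], P K)
    (of_ker : ∀ {K C : Type u} [Group K] [Group C] [IsCyclic C] [Infinite C] (f : K →* C),
      P f.ker → P K)
    (h : IsInfiniteCyclicSeries n c) : P G := by
  obtain ⟨h_top, h_bot, h_step⟩ := h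
  suffices ∀ i, P (c i) from congr ((MulEquiv.subgroupCongr h_top).trans Subgroup.topEquiv) (this 0)
  intro i
  induction i using Fin.reverseInduction with
  | last => exact congr (MulEquiv.subgroupCongr h_bot).symm (of_subsingleton (⊥ : Subgroup G))
  | cast i ih =>
    obtain ⟨hle, _, _, _⟩ := h_step i
    let π := QuotientGroup.mk' ((c i.succ).subgroupOf (c i.castSucc))
    refine of_ker π (congr ?_ ih)
    exact (Subgroup.subgroupOfEquivOfLe hle).symm.trans
      (MulEquiv.subgroupCongr (QuotientGroup.ker_mk' _).symm)

theorem isNoetherianGroup (h : IsInfiniteCyclicSeries n c) : IsNoetherianGroup G :=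
  h.induction (fun e hK => hK.of_injective e.symm.toMonoidHom e.symm.injective)
    (fun _ => .of_subsingleton) (fun f hf => .of_ker f hf .of_isCyclic)

theorem isLocallyIndicable (h : IsInfiniteCyclicSeries n c) : IsLocallyIndicable G :=
  h.induction (fun e hK => hK.of_injective e.symm.toMonoidHom e.symm.injective)
    (fun _ => .of_subsingleton) (fun f hf => .of_ker f hf .of_isCyclic_of_infinite)

end IsInfiniteCyclicSeries

end PolycyclicGroups

section RationalCohomology

variable {G : Type*} [Group G]

/-- The first cohomology `H¹(G; ℚ)` with trivial coefficients, that is, the rational vector space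
of homomorphisms from `G` to the additive group `ℚ`. -/
abbrev RatH1 (G : Type*) [Group G] : Type _ :=
  Additive G →+ ℚ

namespace RatH1

theorem nontrivial_of_hom_ne_one {χ : G →* Multiplicative ℤ} (hχ : χ ≠ 1) :
    Nontrivial (RatH1 G) := by
  refine ⟨(Int.castAddHom ℚ).comp (MonoidHom.toAdditiveLeft χ), 0, fun h => hχ ?_⟩
  ext g
  simpa using DFunLike.congr_fun h (Additive.ofMul g)

/-- The restriction map on `H¹(-; ℚ)` induced by a group homomorphism. -/
def restrict {H : Type*} [Group H] (f : H →* G) : RatH1 G →ₗ[ℚ] RatH1 H where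
  toFun φ := φ.comp f.toAdditive
  map_add' _ _ := rfl
  map_smul' _ _ := rfl

/-- Evaluation of the classes in `H¹(G; ℚ)`, which are homomorphisms, on a set `S` of elements. -/
def evalAt (S : Set G) : RatH1 G →ₗ[ℚ] S → ℚ where
  toFun φ s := φ (.ofMul s)
  map_add' _ _ := rfl
  map_smul' _ _ := rfl

theorem evalAt_injective {S : Set G} (hS : Subgroup.closure S = ⊤) :
    Function.Injective (evalAt S) := fun φ ψ h => by
  have : AddMonoidHom.toMultiplicativeRight φ = AddMonoidHom.toMultiplicativeRight ψ :=
    MonoidHom.eq_of_eqOn_dense hS fun s hs => congrFun h ⟨s, hs⟩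
  exact AddMonoidHom.toMultiplicativeRight.injective this

instance [Group.FG G] : Module.Finite ℚ (RatH1 G) := by
  obtain ⟨S, -, hS⟩ := Group.rank_spec G
  exact .of_injective _ (evalAt_injective hS)

theorem finrank_le_rank [Group.FG G] : Module.finrank ℚ (RatH1 G) ≤ Group.rank G := by
  obtain ⟨S, hcard, hS⟩ := Group.rank_spec G
  simpa [hcard] using LinearMap.finrank_le_finrank_of_injective (evalAt_injective hS)

end RatH1

theorem rank_le_of_antitone_ker {k V : Type*} [Field k] [AddCommGroup V] [Module k V]
    {F : ℕ → Type*} [∀ n, AddCommGroup (F n)] [∀ n, Module k (F n)]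
    [∀ n, Module.Finite k (F n)] (R : ∀ n, V →ₗ[k] F n) {d : ℕ}
    (hd : ∀ n, Module.finrank k (F n) ≤ d)
    (hanti : Antitone fun n => LinearMap.ker (R n)) (hinf : ⨅ n, LinearMap.ker (R n) = ⊥) :
    Module.rank k V ≤ d := by
  refine rank_le fun s hs => ?_
  let W := Submodule.span k (s : Set V)
  have : Module.Finite k W := .span_finset k s
  obtain ⟨n, hn⟩ := IsArtinian.monotone_stabilizes
    ⟨fun n => OrderDual.toDual ((LinearMap.ker (R n)).comap W.subtype),
      fun _ _ hmn => Submodule.comap_mono (hanti hmn)⟩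
  have hker : LinearMap.ker (R n ∘ₗ W.subtype) = ⊥ := by
    refine LinearMap.ker_eq_bot'.mpr fun x hx => Subtype.ext <| (Submodule.mem_bot k).mp ?_
    rw [← hinf, Submodule.mem_iInf]
    intro m
    rcases le_total n m with hnm | hmn
    · have hnm_ker :
          (LinearMap.ker (R n)).comap W.subtype = (LinearMap.ker (R m)).comap W.subtype :=
        hn m hnm
      exact (SetLike.ext_iff.mp hnm_ker x).mp hx
    · exact hanti hmn hx
  calc s.card = Module.finrank k W := (finrank_span_finset_eq_card hs).symm
    _ ≤ Module.finrank k (F n) :=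
      LinearMap.finrank_le_finrank_of_injective (LinearMap.ker_eq_bot.mp hker)
    _ ≤ d := hd n

theorem rank_ratH1_iSup_le {H : ℕ → Subgroup G} (hH : Monotone H) {M : ℕ}
    [∀ n, Group.FG (H n)] (hM : ∀ n, Group.rank (H n) ≤ M) :
    Module.rank ℚ (RatH1 ↥(⨆ n, H n)) ≤ M := by
  let R (n : ℕ) : RatH1 ↥(⨆ n, H n) →ₗ[ℚ] RatH1 (H n) :=
    RatH1.restrict (Subgroup.inclusion (le_iSup H n))
  refine rank_le_of_antitone_ker R (fun n => RatH1.finrank_le_rank.trans (hM n)) ?_ ?_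
  · intro m n hmn φ hφ
    ext x
    exact DFunLike.congr_fun hφ (.ofMul (Subgroup.inclusion (hH hmn) x))
  · refine (Submodule.eq_bot_iff _).mpr fun φ hφ => ?_
    ext ⟨x, hx⟩
    obtain ⟨n, hn⟩ := (Subgroup.mem_iSup_of_directed hH.directed_le).mp hx
    exact DFunLike.congr_fun (Submodule.mem_iInf _ |>.mp hφ n) (.ofMul ⟨x, hn⟩)

theorem exists_iSup_le_of_fg {H : ℕ → Subgroup G} (hH : Monotone H) (hfg : (⨆ n, H n).FG) :
    ∃ p, ⨆ n, H n ≤ H p := by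
  obtain ⟨S, hS⟩ := hfg
  have hS_union : (S : Set G) ⊆ ⋃ n, (H n : Set G) := by
    rw [← Subgroup.coe_iSup_of_directed hH.directed_le, ← hS]
    exact Subgroup.subset_closure
  obtain ⟨p, hp⟩ := Directed.exists_mem_subset_of_finset_subset_biUnion hH.directed_le hS_union
  exact ⟨p, by rwa [← hS, Subgroup.closure_le]⟩

theorem isTakahasiGroup_of_fg_of_finite_ratH1
    (hG : ∀ H : Subgroup G, Module.Finite ℚ (RatH1 H) → Group.FG H) : IsTakahasiGroup G := by
  intro M H hstep hgen
  have hmono : Monotone H := monotone_nat_of_le_succ hstep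
  have hfg (n : ℕ) : Group.FG (H n) :=
    (Group.fg_iff_subgroup_fg _).mpr <| (hgen n).imp fun _ hS => hS.1
  have hrank (n : ℕ) : Group.rank (H n) ≤ M := by
    obtain ⟨S, hS, hcard⟩ := hgen n
    exact (Subgroup.rank_congr hS).symm.trans_le
      ((Subgroup.rank_closure_finset_le_card S).trans hcard)
  have hfinite : Module.Finite ℚ (RatH1 ↥(⨆ n, H n)) :=
    Module.rank_lt_aleph0_iff.mp <|
      (rank_ratH1_iSup_le hmono hrank).trans_lt (Cardinal.natCast_lt_aleph0)
  obtain ⟨p, hp⟩ := exists_iSup_le_of_fg hmono ((Group.fg_iff_subgroup_fg _).mp (hG _ hfinite))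
  exact ⟨p, fun i hpi => le_antisymm ((le_iSup H i).trans hp) (hmono hpi)⟩

end RationalCohomology

section FreeProducts

open Monoid (CoprodI)

/-- `G` is the internal free product of the subgroups `L j`. -/
def IsInternalFreeProduct {G : Type*} [Group G] {κ : Type*} (L : κ → Subgroup G) : Prop :=
  Function.Bijective (CoprodI.lift fun j => (L j).subtype)

namespace IsInternalFreeProduct

variable {G : Type*} [Group G] {κ : Type*} {L : κ → Subgroup G}

theorem iSup_eq_top (hL : IsInternalFreeProduct L) : ⨆ j, L j = ⊤ := by
  simpa [CoprodI.range_eq_iSup] using MonoidHom.range_eq_top.mpr hL.surjective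

theorem exists_hom {A : Type*} [Monoid A] (hL : IsInternalFreeProduct L) (f : ∀ j, L j →* A) :
    ∃ F : G →* A, ∀ j (x : L j), F x = f j x := by
  let e := MulEquiv.ofBijective (CoprodI.lift fun j => (L j).subtype) hL
  refine ⟨(CoprodI.lift f).comp e.symm.toMonoidHom, fun j x => ?_⟩
  have hx : e (CoprodI.of x) = x := CoprodI.lift_of (fun j => (L j).subtype) x
  simp [← hx]

theorem finite_nontrivial_ratH1 [Module.Finite ℚ (RatH1 G)] (hL : IsInternalFreeProduct L) :
    Finite {j // Nontrivial (RatH1 (L j))} := by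
  classical
  choose χ hχ using fun j : {j // Nontrivial (RatH1 (L j))} =>
    have := j.2
    exists_ne (0 : RatH1 (L j))
  have hext (j) : ∃ ψ : RatH1 G, ∀ i (x : L i),
      ψ (.ofMul ↑x) = (Pi.single j.1 (χ j) : ∀ i, RatH1 (L i)) i (.ofMul x) := by
    obtain ⟨F, hF⟩ := hL.exists_hom fun i =>
      AddMonoidHom.toMultiplicativeRight ((Pi.single j.1 (χ j) : ∀ i, RatH1 (L i)) i)
    exact ⟨MonoidHom.toAdditiveLeft F, fun i x => hF i x⟩
  choose ψ hψ using hext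
  suffices LinearIndependent ℚ ψ from this.finite
  refine linearIndependent_iff'.mpr fun s a hsum j hj => ?_
  obtain ⟨x, hx⟩ := DFunLike.ne_iff.mp (hχ j)
  have heval : ∑ i ∈ s, a i * ψ i (.ofMul (x.toMul : G)) = 0 := by
    simpa using DFunLike.congr_fun hsum (.ofMul (x.toMul : G))
  rw [Finset.sum_eq_single_of_mem j hj] at heval
  · have hjx : ψ j (.ofMul (x.toMul : G)) = χ j x := by simp [hψ]
    exact (mul_eq_zero.mp heval).resolve_right (hjx.trans_ne hx)
  · intro i _ hij
    simp [hψ, Pi.single_eq_of_ne (Subtype.coe_injective.ne hij.symm)]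

theorem fg (hL : IsInternalFreeProduct L) (hfg : ∀ j, Group.FG (L j))
    (hH1 : ∀ j, L j ≠ ⊥ → Nontrivial (RatH1 (L j))) [Module.Finite ℚ (RatH1 G)] : Group.FG G := by
  have := hL.finite_nontrivial_ratH1
  have : Finite {j // L j ≠ ⊥} :=
    Finite.of_injective (Subtype.impEmbedding _ _ hH1) (Subtype.impEmbedding _ _ hH1).injective
  rw [Group.fg_def, ← hL.iSup_eq_top, ← iSup_ne_bot_subtype L]
  exact Subgroup.FG.iSup _ fun j => (Group.fg_iff_subgroup_fg _).mp (hfg j)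

end IsInternalFreeProduct

end FreeProducts

section Cocycles

open Monoid (CoprodI)

/-- A `1`-cocycle of a group `G` acting on `X`, with values in the functions from `X` to `A`.
Equivalently, a functor to `A` from the action groupoid of `G` on `X`. -/
def IsCocycle {G X A : Type*} [Group G] [MulAction G X] [Group A] (c : G → X → A) : Prop :=
  ∀ g h x, c (g * h) x = c g (h • x) * c h x

namespace IsCocycle

variable {G X A : Type*} [Group G] [MulAction G X] [Group A] {c : G → X → A}

theorem map_one (hc : IsCocycle c) (x : X) : c 1 x = 1 := by
  simpa using hc 1 1 x

/-- The homomorphism to `A` given by a cocycle on the stabilizer of a point. -/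
def toStabilizerHom (hc : IsCocycle c) (x : X) : MulAction.stabilizer G x →* A where
  toFun g := c g x
  map_one' := hc.map_one x
  map_mul' g h := by rw [Subgroup.coe_mul, hc, MulAction.mem_stabilizer_iff.mp h.2]

end IsCocycle

theorem exists_isCocycle_coprodI {I : Type*} {S : I → Type*} [∀ i, Group (S i)] {X A : Type*}
    [MulAction (CoprodI S) X] [Group A] (c : ∀ i, S i → X → A)
    (hc : ∀ i s t x, c i (s * t) x = c i s (CoprodI.of t • x) * c i t x) :
    ∃ C : CoprodI S → X → A, IsCocycle C ∧ ∀ i (s : S i) x, C (CoprodI.of s) x = c i s x := by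
  have hc_one (i x) : c i 1 x = 1 := by simpa using hc i 1 1 x
  -- A cocycle is the same as a lift of the action on `X` to `X × A` by right `A`-equivariant maps.
  let Φ : CoprodI S →* Function.End (X × A) := CoprodI.lift fun i =>
    { toFun s p := (CoprodI.of s • p.1, c i s p.1 * p.2)
      map_one' := funext fun p => by simp [hc_one, Function.End.one_def]
      map_mul' s t := funext fun p => by
        change _ =
          (CoprodI.of s • CoprodI.of t • p.1, c i s (CoprodI.of t • p.1) * (c i t p.1 * p.2))
        simp [mul_smul, hc, mul_assoc] }
  have hΦ_of (i) (s : S i) (p) : Φ (CoprodI.of s) p = (CoprodI.of s • p.1, c i s p.1 * p.2) :=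
    congrFun (CoprodI.lift_of (N := Function.End (X × A)) _ s) p
  have hΦ_mul (g h p) : Φ (g * h) p = Φ g (Φ h p) := congrFun (map_mul Φ g h) p
  have hΦ (g x a) : Φ g (x, a) = (g • x, (Φ g (x, 1)).2 * a) := by
    induction g using CoprodI.induction_on generalizing x a with
    | one => simp [Function.End.one_def]
    | of i s => simp [hΦ_of]
    | mul g h ihg ihh =>
      rw [hΦ_mul, hΦ_mul, ihh x a, ihh x 1, ihg _ (_ * a), ihg _ (_ * 1), mul_one, mul_smul,
        mul_assoc]
  refine ⟨fun g x => (Φ g (x, 1)).2, fun g h x => ?_, fun i s x => by simp [hΦ_of]⟩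
  simp only [hΦ_mul]
  rw [hΦ h, hΦ g, mul_one]

end Cocycles

section SchreierSystems

open Monoid (CoprodI)

variable {I : Type u} {S : I → Type v} [∀ i, Group (S i)] {X : Type*} [MulAction (CoprodI S) X]

variable (S) in
/-- The stabilizer of `x` in the free factor `S i`. -/
def factorStabilizer (i : I) (x : X) : Subgroup (S i) :=
  (MulAction.stabilizer (CoprodI S) x).comap CoprodI.of

/-- A Schreier system for an action of a free product `∗ᵢ S i`: each `S i`-orbit has a chosen root,
`label i x` moves the root of the `S i`-orbit of `x` to `x`, and `rep x` moves the base point `x₀`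
to `x`. As `induction` expresses, the elements `rep x` are obtained by composing labels along a
tree which is rooted at `x₀` and joins points to the roots of their orbits. -/
structure SchreierSystem (S : I → Type v) [∀ i, Group (S i)] {X : Type w}
    [MulAction (CoprodI S) X] (x₀ : X) where
  root : I → X → X
  root_smul : ∀ i (s : S i) x, root i (CoprodI.of s • x) = root i x
  label : ∀ i, X → S i
  label_smul_root : ∀ i x, CoprodI.of (label i x) • root i x = x
  label_root : ∀ i x, label i (root i x) = 1
  rep : X → CoprodI S
  rep_base : rep x₀ = 1
  induction : ∀ {P : X → Prop}, P x₀ →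
    (∀ i x, rep x = CoprodI.of (label i x) * rep (root i x) → P (root i x) → P x) → ∀ x, P x

section Existence

theorem exists_list_prod_of_eq (g : CoprodI S) :
    ∃ l : List (Σ i, S i), (l.map fun p => CoprodI.of p.2).prod = g := by
  induction g using CoprodI.induction_left with
  | one => exact ⟨[], rfl⟩
  | mul s g ih =>
    obtain ⟨l, rfl⟩ := ih
    exact ⟨⟨_, s⟩ :: l, List.prod_cons⟩

variable (S) in
theorem exists_descending_height [MulAction.IsPretransitive (CoprodI S) X] (x₀ : X) :
    ∃ d : X → ℕ, ∀ x ≠ x₀, ∃ i, ∃ s : S i, d (CoprodI.of s • x) < d x := by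
  let lengths (x : X) : Set ℕ :=
    {n | ∃ l : List (Σ i, S i), l.length = n ∧ (l.map fun p => CoprodI.of p.2).prod • x₀ = x}
  refine ⟨fun x => sInf (lengths x), fun x hx => ?_⟩
  have hne : (lengths x).Nonempty := by
    obtain ⟨g, rfl⟩ := MulAction.exists_smul_eq (CoprodI S) x₀ x
    obtain ⟨l, rfl⟩ := exists_list_prod_of_eq g
    exact ⟨_, l, rfl, rfl⟩
  obtain ⟨l, hlen, rfl⟩ := Nat.sInf_mem hne
  cases l with
  | nil => simp at hx
  | cons p l =>
    have hmem : l.length ∈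
        lengths (CoprodI.of p.2⁻¹ • ((p :: l).map fun p => CoprodI.of p.2).prod • x₀) :=
      ⟨l, rfl, by simp [mul_smul]⟩
    exact ⟨p.1, p.2⁻¹, (Nat.sInf_le hmem).trans_lt (l.length.lt_succ_self.trans_eq hlen)⟩

theorem exists_recursion_of_lt {X Y : Type*} {d : X → ℕ} {x₀ : X} {parent : X → X}
    (hparent : ∀ x ≠ x₀, d (parent x) < d x) (a : Y) (F : X → Y → Y) :
    ∃ r : X → Y, r x₀ = a ∧ ∀ x ≠ x₀, r x = F x (r (parent x)) := by
  classical
  let step (x : X) (r : ∀ y, d y < d x → Y) : Y :=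
    if hx : x = x₀ then a else F x (r (parent x) (hparent x hx))
  have hwf : WellFounded fun x y => d x < d y := (measure d).wf
  refine ⟨hwf.fix step, ?_, fun x hx => ?_⟩ <;> rw [hwf.fix_eq]
  · exact dif_pos rfl
  · exact dif_neg hx

variable (S) in
theorem exists_root_label (d : X → ℕ) : ∃ (root : I → X → X) (label : ∀ i, X → S i),
    (∀ i (s : S i) x, root i (CoprodI.of s • x) = root i x) ∧
    (∀ i x, CoprodI.of (label i x) • root i x = x) ∧
    (∀ i x, label i (root i x) = 1) ∧
    ∀ i (s : S i) x, d (root i x) ≤ d (CoprodI.of s • x) := by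
  let F (i : I) : Subgroup (CoprodI S) := (CoprodI.of : S i →* CoprodI S).range
  let root (i : I) (x : X) : X :=
    Function.argminOn d (MulAction.orbit (F i) x) (MulAction.nonempty_orbit x)
  have hroot (i x) : root i x ∈ MulAction.orbit (F i) x := Function.argminOn_mem ..
  have hroot_of_mem (i) {x y : X} (h : y ∈ MulAction.orbit (F i) x) : root i y = root i x := by
    simp only [root, MulAction.orbit_eq_iff.mpr h]
  have hof (i) (s : S i) (x : X) : CoprodI.of s • x ∈ MulAction.orbit (F i) x :=
    ⟨⟨_, s, rfl⟩, rfl⟩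
  have hlabel (i x) : ∃ s : S i, CoprodI.of s • root i x = x ∧ (root i x = x → s = 1) := by
    by_cases hx : root i x = x
    · exact ⟨1, by simpa using hx, fun _ => rfl⟩
    · obtain ⟨⟨_, s, rfl⟩, hs⟩ := MulAction.mem_orbit_symm.mp (hroot i x)
      exact ⟨s, hs, fun h => (hx h).elim⟩
  choose label hlabel_smul hlabel_one using hlabel
  exact ⟨root, label, fun i s x => hroot_of_mem i (hof i s x), hlabel_smul,
    fun i x => hlabel_one i _ (hroot_of_mem i (hroot i x)),
    fun i s x => Function.argminOn_le _ _ (hof i s x)⟩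

theorem SchreierSystem.nonempty [MulAction.IsPretransitive (CoprodI S) X] (x₀ : X) :
    Nonempty (SchreierSystem S x₀) := by
  obtain ⟨d, hd⟩ := exists_descending_height S x₀
  obtain ⟨root, label, root_smul, label_smul_root, label_root, hroot_le⟩ := exists_root_label S d
  have hdescent (x) : ∃ (y : X) (g : CoprodI S), x ≠ x₀ →
      ∃ i, y = root i x ∧ g = CoprodI.of (label i x) ∧ d y < d x := by
    by_cases hx : x = x₀
    · exact ⟨x, 1, fun h => (h hx).elim⟩
    · obtain ⟨i, s, hs⟩ := hd x hx
      exact ⟨_, _, fun _ => ⟨i, rfl, rfl, (hroot_le i s x).trans_lt hs⟩⟩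
  choose parent g hparent using hdescent
  have hparent_lt (x) (hx : x ≠ x₀) : d (parent x) < d x := (hparent x hx).choose_spec.2.2
  obtain ⟨rep, rep_base, hrep⟩ := exists_recursion_of_lt hparent_lt 1 fun x => (g x * ·)
  refine ⟨⟨root, root_smul, label, label_smul_root, label_root, rep, rep_base, ?_⟩⟩
  intro P hbase hstep x
  induction x using (measure d).wf.induction with
  | _ x ih =>
    by_cases hx : x = x₀
    · rwa [hx]
    · obtain ⟨i, hi, hg, hlt⟩ := hparent x hx
      refine hstep i x ?_ (ih _ (hi ▸ hlt))
      rw [hrep x hx, hg, hi]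

end Existence

namespace SchreierSystem

variable {x₀ : X} (T : SchreierSystem S x₀)

theorem root_root (i : I) (x : X) : T.root i (T.root i x) = T.root i x := by
  conv_rhs => rw [← T.label_smul_root i x, T.root_smul]

theorem rep_smul_base (x : X) : T.rep x • x₀ = x := by
  refine T.induction (P := fun x => T.rep x • x₀ = x) ?_ (fun i x hx ih => ?_) x
  · rw [T.rep_base, one_smul]
  · rw [hx, mul_smul, ih, T.label_smul_root]

/-- The Schreier element `(rep (g • x))⁻¹ * g * rep x` of the stabilizer of the base point. -/
def gen (g : CoprodI S) (x : X) : MulAction.stabilizer (CoprodI S) x₀ :=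
  ⟨(T.rep (g • x))⁻¹ * g * T.rep x, by
    rw [MulAction.mem_stabilizer_iff, mul_smul, mul_smul, T.rep_smul_base, inv_smul_eq_iff,
      T.rep_smul_base]⟩

theorem isCocycle_gen : IsCocycle T.gen := fun g h x => Subtype.ext <| by
  simp [gen, mul_smul, mul_assoc]

theorem gen_coe_base (g : MulAction.stabilizer (CoprodI S) x₀) : T.gen g x₀ = g := by
  ext
  simp [gen, MulAction.mem_stabilizer_iff.mp g.2, T.rep_base]

/-- The Schreier generator attached to the edge that joins `x` to the root of its `S i`-orbit. -/
def edge (i : I) (x : X) : MulAction.stabilizer (CoprodI S) x₀ :=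
  T.gen (CoprodI.of (T.label i x)) (T.root i x)

theorem coe_edge (i : I) (x : X) :
    (T.edge i x : CoprodI S) =
      (T.rep x)⁻¹ * CoprodI.of (T.label i x) * T.rep (T.root i x) := by
  simp [edge, gen, T.label_smul_root]

theorem edge_root (i : I) (x : X) : T.edge i (T.root i x) = 1 := by
  ext
  simp [coe_edge, T.label_root, T.root_root]

theorem edge_eq_one {i : I} {x : X}
    (h : T.rep x = CoprodI.of (T.label i x) * T.rep (T.root i x)) : T.edge i x = 1 := by
  ext
  simp [coe_edge, h]

/-- Conjugation by `rep x`, as an embedding of the stabilizer of `x` in `S i` into the stabilizer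
of the base point. -/
def vertexHom (i : I) (x : X) : factorStabilizer S i x →* MulAction.stabilizer (CoprodI S) x₀ where
  toFun s := T.gen (CoprodI.of s.1) x
  map_one' := by simp [T.isCocycle_gen.map_one]
  map_mul' s t := by
    rw [Subgroup.coe_mul, map_mul, T.isCocycle_gen, MulAction.mem_stabilizer_iff.mp t.2]

theorem coe_vertexHom (i : I) (x : X) (s : factorStabilizer S i x) :
    (T.vertexHom i x s : CoprodI S) = (T.rep x)⁻¹ * CoprodI.of s.1 * T.rep x := by
  simp [vertexHom, gen, MulAction.mem_stabilizer_iff.mp s.2]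

theorem range_vertexHom (i : I) (x : X) :
    (T.vertexHom i x).range =
      ((MulAut.conj (T.rep x)⁻¹).toMonoidHom.comp CoprodI.of : S i →* CoprodI S).range.subgroupOf
        (MulAction.stabilizer (CoprodI S) x₀) := by
  ext g
  constructor
  · rintro ⟨s, rfl⟩
    exact ⟨s, by simp [coe_vertexHom]⟩
  · rintro ⟨s, hs⟩
    have hs' : (T.rep x)⁻¹ * CoprodI.of s * T.rep x = g := by simpa using hs
    have hsx : CoprodI.of s • x = x := by
      have hg := MulAction.mem_stabilizer_iff.mp g.2
      rwa [← hs', mul_smul, mul_smul, T.rep_smul_base, inv_smul_eq_iff, T.rep_smul_base] at hg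
    exact ⟨⟨s, hsx⟩, Subtype.ext <| (T.coe_vertexHom ..).trans hs'⟩

/-- The action of `s` on the `S i`-orbit of `x`, moved to the root of that orbit by the labels. -/
def slide (i : I) (s : S i) (x : X) : factorStabilizer S i (T.root i x) :=
  ⟨(T.label i (CoprodI.of s • x))⁻¹ * s * T.label i x, by
    have h := T.label_smul_root i (CoprodI.of s • x)
    rw [T.root_smul] at h
    simp [factorStabilizer, mul_smul, inv_smul_eq_iff, T.label_smul_root, h]⟩

theorem gen_of (i : I) (s : S i) (x : X) :
    T.gen (CoprodI.of s) x =
      T.edge i (CoprodI.of s • x) * T.vertexHom i (T.root i x) (T.slide i s x) *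
        (T.edge i x)⁻¹ := by
  ext
  simp [gen, coe_edge, coe_vertexHom, slide, T.root_smul, mul_assoc]

theorem eq_top_of_edge_mem_of_range_vertexHom_le
    {K : Subgroup (MulAction.stabilizer (CoprodI S) x₀)} (hedge : ∀ i x, T.edge i x ∈ K)
    (hvertex : ∀ i x, (T.vertexHom i (T.root i x)).range ≤ K) : K = ⊤ := by
  have hgen (g x) : T.gen g x ∈ K := by
    induction g using CoprodI.induction_on generalizing x with
    | one => simp [T.isCocycle_gen.map_one]
    | of i s =>
      rw [gen_of]
      exact K.mul_mem (K.mul_mem (hedge ..) (hvertex _ _ ⟨_, rfl⟩)) (K.inv_mem (hedge ..))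
    | mul g h ihg ihh =>
      rw [T.isCocycle_gen]
      exact K.mul_mem (ihg _) (ihh _)
  refine (Subgroup.eq_top_iff' K).mpr fun g => ?_
  rw [← T.gen_coe_base g]
  exact hgen _ _

theorem toStabilizerHom_gen {A : Type*} [Group A] {C : CoprodI S → X → A} (hC : IsCocycle C)
    (hC_rep : ∀ x, C (T.rep x) x₀ = 1) (g : CoprodI S) (x : X) :
    hC.toStabilizerHom x₀ (T.gen g x) = C g x := by
  have hgen : T.rep (g • x) * T.gen g x = g * T.rep x := by simp [gen, mul_assoc]
  calc C (T.gen g x) x₀ = C (T.rep (g • x) * T.gen g x) x₀ := by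
        rw [hC, MulAction.mem_stabilizer_iff.mp (T.gen g x).2, hC_rep, one_mul]
    _ = C g x := by rw [hgen, hC, hC_rep, T.rep_smul_base, mul_one]

/-- The root of the `S i`-orbit of `x`, as an element of the set of all roots. -/
def orbitRoot (i : I) (x : X) : Set.range (T.root i) :=
  ⟨T.root i x, x, rfl⟩

section VertexFamily

variable {A : Type*} [Group A] {i : I}

theorem vertexFamily_congr {Y : Set X} (φ : ∀ y : Y, factorStabilizer S i (y : X) →* A) {y z : Y}
    (hyz : y = z) {s : factorStabilizer S i (y : X)} {t : factorStabilizer S i (z : X)}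
    (hst : s.1 = t.1) : φ y s = φ z t := by
  subst hyz
  rw [Subtype.ext hst]

variable (φ : ∀ y : Set.range (T.root i), factorStabilizer S i (y : X) →* A)

theorem vertexFamily_slide_mul (s t : S i) (x : X) :
    φ (T.orbitRoot i x) (T.slide i (s * t) x) =
      φ (T.orbitRoot i (CoprodI.of t • x)) (T.slide i s (CoprodI.of t • x)) *
        φ (T.orbitRoot i x) (T.slide i t x) := by
  have hroot : T.orbitRoot i (CoprodI.of t • x) = T.orbitRoot i x :=
    Subtype.ext (T.root_smul i t x)
  have hmem : (T.slide i s (CoprodI.of t • x)).1 ∈ factorStabilizer S i (T.root i x) := by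
    simpa only [T.root_smul] using (T.slide i s (CoprodI.of t • x)).2
  have hslide : T.slide i (s * t) x = ⟨_, hmem⟩ * T.slide i t x := by
    ext
    simp [slide, mul_smul, mul_assoc]
  rw [vertexFamily_congr φ hroot (t := ⟨_, hmem⟩) rfl, hslide]
  exact map_mul ..

theorem vertexFamily_slide_root {x : X} {s : S i} (hs : s ∈ factorStabilizer S i (T.root i x)) :
    φ (T.orbitRoot i (T.root i x)) (T.slide i s (T.root i x)) = φ (T.orbitRoot i x) ⟨s, hs⟩ := by
  have hs_smul : CoprodI.of s • T.root i x = T.root i x := hs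
  exact vertexFamily_congr φ (Subtype.ext (T.root_root i x))
    (by simp [slide, hs_smul, T.label_root])

end VertexFamily

theorem slide_label_root (i : I) (x : X) : T.slide i (T.label i x) (T.root i x) = 1 := by
  ext
  simp [slide, T.label_smul_root, T.label_root]

theorem exists_hom {A : Type*} [Group A] {f : I → X → A}
    (hf : ∀ i x, T.edge i x = 1 → f i x = 1)
    (φ : ∀ i (y : Set.range (T.root i)), factorStabilizer S i (y : X) →* A) :
    ∃ ψ : MulAction.stabilizer (CoprodI S) x₀ →* A,
      (∀ i x, ψ (T.edge i x) = f i x) ∧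
        ∀ i (y : Set.range (T.root i)) s, ψ (T.vertexHom i y s) = φ i y s := by
  -- By `gen_of`, these are the only possible values of the cocycle `g ↦ x ↦ ψ (gen g x)` on `S i`.
  obtain ⟨C, hC, hC_of⟩ := exists_isCocycle_coprodI
    (fun i s x => f i (CoprodI.of s • x) * φ i (T.orbitRoot i x) (T.slide i s x) * (f i x)⁻¹)
    fun i s t x => by simp [vertexFamily_slide_mul, mul_smul, mul_assoc]
  have hf_root (i x) : f i (T.root i x) = 1 := hf i _ (T.edge_root i x)
  have hC_label (i x) : C (CoprodI.of (T.label i x)) (T.root i x) = f i x := by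
    rw [hC_of, slide_label_root, T.label_smul_root, hf_root, inv_one, mul_one]
    exact mul_eq_left.mpr (map_one _)
  have hC_rep (x) : C (T.rep x) x₀ = 1 := by
    refine T.induction (P := fun x => C (T.rep x) x₀ = 1) ?_ (fun i x hx ih => ?_) x
    · rw [T.rep_base, hC.map_one]
    · rw [hx, hC, ih, T.rep_smul_base, mul_one, hC_label, hf i x (T.edge_eq_one hx)]
  have hψ := T.toStabilizerHom_gen hC hC_rep
  refine ⟨hC.toStabilizerHom x₀, fun i x => (hψ ..).trans (hC_label i x), fun i y s => ?_⟩
  obtain ⟨_, x, rfl⟩ := y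
  have hs : CoprodI.of s.1 • T.root i x = T.root i x := s.2
  calc hC.toStabilizerHom x₀ (T.vertexHom i (T.root i x) s)
    _ = C (CoprodI.of s.1) (T.root i x) := hψ ..
    _ = φ i (T.orbitRoot i (T.root i x)) (T.slide i s (T.root i x)) := by
      simp [hC_of, hs, hf_root]
    _ = φ i (T.orbitRoot i x) s := T.vertexFamily_slide_root (φ i) s.2

end SchreierSystem

end SchreierSystems

section Kurosh

open Monoid (CoprodI)

variable {I : Type u} {S : I → Type v} [∀ i, Group (S i)]

namespace SchreierSystem

variable {X : Type*} [MulAction (CoprodI S) X] {x₀ : X} (T : SchreierSystem S x₀)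

/-- The free factors of the stabilizer of the base point given by Kurosh's theorem: the cyclic
groups generated by the nontrivial edge generators, and one vertex group for each orbit of each
factor. -/
def factor : {e : I × X // T.edge e.1 e.2 ≠ 1} ⊕ (Σ i, Set.range (T.root i)) →
    Subgroup (MulAction.stabilizer (CoprodI S) x₀)
  | .inl e => Subgroup.zpowers (T.edge e.1.1 e.1.2)
  | .inr y => (T.vertexHom y.1 y.2).range

theorem infinite_zpowers_edge {i : I} {x : X} (hx : T.edge i x ≠ 1) :
    Infinite (Subgroup.zpowers (T.edge i x)) := by
  classical
  obtain ⟨ψ, hψ, -⟩ := T.exists_hom (A := Multiplicative ℤ)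
    (f := fun j y => if T.edge j y = 1 then 1 else .ofAdd 1) (fun _ _ h => if_pos h) fun _ _ => 1
  refine Set.infinite_coe_iff.mpr (infinite_zpowers.mpr fun hfin => ?_)
  have hfin_ψ := ψ.isOfFinOrder hfin
  rw [hψ, if_neg hx, isOfFinOrder_iff_eq_one] at hfin_ψ
  exact absurd hfin_ψ (by decide)

theorem iSup_factor : ⨆ j, T.factor j = ⊤ := by
  refine T.eq_top_of_edge_mem_of_range_vertexHom_le (fun i x => ?_) fun i x => ?_
  · by_cases hx : T.edge i x = 1
    · rw [hx]
      exact one_mem _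
    · exact Subgroup.mem_iSup_of_mem (.inl ⟨(i, x), hx⟩) (Subgroup.mem_zpowers _)
  · exact le_iSup T.factor (.inr ⟨i, T.root i x, x, rfl⟩)

theorem isInternalFreeProduct_factor : IsInternalFreeProduct T.factor := by
  classical
  obtain ⟨ρ, hρ_edge, hρ_vertex⟩ := T.exists_hom (A := CoprodI fun j => T.factor j)
    (f := fun i x => if hx : T.edge i x = 1 then 1 else
      CoprodI.of (M := fun j => T.factor j) (i := .inl ⟨(i, x), hx⟩) ⟨_, Subgroup.mem_zpowers _⟩)
    (fun _ _ h => dif_pos h)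
    fun i y => (CoprodI.of (M := fun j => T.factor j) (i := .inr ⟨i, y⟩)).comp
      (T.vertexHom i y).rangeRestrict
  have hρ : ρ.comp (CoprodI.lift fun j => (T.factor j).subtype) = .id _ := by
    refine CoprodI.ext_hom _ _ fun j => MonoidHom.ext fun x => ?_
    suffices ρ x = CoprodI.of (M := fun j => T.factor j) x by simpa
    rcases j with e | y
    · obtain ⟨_, n, rfl⟩ := x
      let ε : T.factor (.inl e) := ⟨T.edge e.1.1 e.1.2, Subgroup.mem_zpowers _⟩
      have hε : ρ ε = CoprodI.of (M := fun j => T.factor j) ε :=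
        (hρ_edge ..).trans (dif_neg e.2)
      change ρ ↑(ε ^ n) = CoprodI.of (M := fun j => T.factor j) (ε ^ n)
      rw [Subgroup.coe_zpow, map_zpow, map_zpow, hε]
    · obtain ⟨_, s, rfl⟩ := x
      exact hρ_vertex ..
  constructor
  · exact (show Function.LeftInverse ρ _ from DFunLike.congr_fun hρ).injective
  · rw [← MonoidHom.range_eq_top, CoprodI.range_eq_iSup]
    simpa using T.iSup_factor

end SchreierSystem

theorem exists_kurosh_decomposition (H : Subgroup (CoprodI S)) :
    ∃ (κ : Type (max u v)) (L : κ → Subgroup H), IsInternalFreeProduct L ∧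
      ∀ j, (IsCyclic (L j) ∧ Infinite (L j)) ∨ ∃ i g, L j =
        ((MulAut.conj g).toMonoidHom.comp CoprodI.of : S i →* CoprodI S).range.subgroupOf H := by
  obtain ⟨T⟩ := SchreierSystem.nonempty (S := S) (QuotientGroup.mk 1 : CoprodI S ⧸ H)
  rw [← MulAction.stabilizer_quotient H]
  refine ⟨_, T.factor, T.isInternalFreeProduct_factor, ?_⟩
  rintro (e | ⟨i, y⟩)
  · exact .inl ⟨inferInstanceAs (IsCyclic (Subgroup.zpowers _)), T.infinite_zpowers_edge e.2⟩
  · exact .inr ⟨i, _, T.range_vertexHom i y⟩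

theorem exists_injective_hom_range_subgroupOf {K G : Type*} [Group K] [Group G] {f : K →* G}
    (hf : Function.Injective f) (H : Subgroup G) :
    ∃ F : f.range.subgroupOf H →* K, Function.Injective F := by
  let toRange : f.range.subgroupOf H →* f.range := H.subtype.subgroupComap f.range
  have htoRange : Function.Injective toRange := fun x y hxy =>
    Subtype.ext <| Subtype.ext <| congrArg (fun z : f.range => (z : G)) hxy
  let e : f.range ≃* K := (MonoidHom.ofInjective hf).symm
  exact ⟨e.toMonoidHom.comp toRange, e.injective.comp htoRange⟩

end Kurosh

theorem isTakahasiGroup_of_free_product_strongly_polycyclic_general {I : Type*} (S : I → Type*)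
    [∀ i, Group (S i)] (hS_noeth : ∀ i, IsNoetherianGroup (S i))
    (hS_ind : ∀ i, IsLocallyIndicable (S i)) : IsTakahasiGroup (Monoid.CoprodI S) := by
  refine isTakahasiGroup_of_fg_of_finite_ratH1 fun H hH => ?_
  obtain ⟨κ, L, hL, hL_factor⟩ := exists_kurosh_decomposition H
  have hL_props (j) : IsNoetherianGroup (L j) ∧ IsLocallyIndicable (L j) := by
    rcases hL_factor j with ⟨_, _⟩ | ⟨i, g, hj⟩
    · exact ⟨.of_isCyclic, .of_isCyclic_of_infinite⟩
    · rw [hj]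
      obtain ⟨f, hf⟩ := exists_injective_hom_range_subgroupOf
        (f := (MulAut.conj g).toMonoidHom.comp Monoid.CoprodI.of)
        ((MulAut.conj g).injective.comp (Monoid.CoprodI.of_injective i)) H
      exact ⟨(hS_noeth i).of_injective f hf, (hS_ind i).of_injective f hf⟩
  have hfg (j) : Group.FG (L j) := (hL_props j).1.fg
  refine hL.fg hfg fun j hj => ?_
  have : Nontrivial (L j) := (Subgroup.nontrivial_iff_ne_bot _).mpr hj
  obtain ⟨χ, hχ⟩ := (hL_props j).2.exists_hom_ne_one
  exact RatH1.nontrivial_of_hom_ne_one hχ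

/-- a free product `N = S 1 ∗ … ∗ S t` of finitely many strongly
polycyclic groups is a Takahasi group. -/
theorem isTakahasiGroup_of_free_product_strongly_polycyclic
    (t : ℕ) (S : Fin t → Type*) [∀ i, Group (S i)]
    (hsp : ∀ i, ∃ (h : ℕ) (c : Fin (h + 1) → Subgroup (S i)), IsInfiniteCyclicSeries h c) :
    IsTakahasiGroup (Monoid.CoprodI S) := by
  choose _ _ hseries using hsp
  exact isTakahasiGroup_of_free_product_strongly_polycyclic_general S
    (fun i => (hseries i).isNoetherianGroup) fun i => (hseries i).isLocallyIndicable
end
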